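/- Let d ≥ 1 and ε > 0. For i = 1, 2, let h_i ∈ L^∞(𝕋^d) be a probability density, and let Ū_i ∈ C¹(𝕋^d) be a weak solution of ε² Δ Ū_i = h_i − 1, i.e. ε² ∫_{𝕋^d} ∇Ū_i · ∇φ dx = −∫_{𝕋^d} (h_i − 1) φ dx for every smooth φ : 𝕋^d → ℝ. Then ∫_{𝕋^d} |∇Ū_1(x) − ∇Ū_2(x)|² dx ≤ ε^{−4} · max_i ‖h_i‖_{L^∞(𝕋^d)} · W₂²(h_1 dx, h_2 dx). -/

import Mathlib

open MeasureTheory Real Set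
open scoped ENNReal

noncomputable section

/-- The fundamental domain `[0,1)^d` of the flat torus `𝕋^d = ℝ^d/ℤ^d`. -/
def Tcube (d : ℕ) : Set (Fin d → ℝ) := Set.univ.pi fun _ => Set.Ico (0:ℝ) 1

/-- The Haar (Lebesgue) probability measure on the torus `𝕋^d`, realised as Lebesgue
measure restricted to the fundamental domain `[0,1)^d`. -/
def torusMeasure (d : ℕ) : Measure (Fin d → ℝ) := volume.restrict (Tcube d)

/-- The Euclidean norm on `ℝ^d`. -/
def euclNorm {d : ℕ} (v : Fin d → ℝ) : ℝ := Real.sqrt (∑ i, (v i) ^ 2)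

/-- The lattice vector in `ℝ^d` associated to `k ∈ ℤ^d`. -/
def latVec {d : ℕ} (k : Fin d → ℤ) : Fin d → ℝ := fun i => (k i : ℝ)

/-- `ℤ^d`-periodicity of a function on `ℝ^d`; such functions are exactly the functions
on the torus `𝕋^d`. -/
def ZPeriodic {d : ℕ} {α : Type*} (f : (Fin d → ℝ) → α) : Prop :=
  ∀ (x : Fin d → ℝ) (k : Fin d → ℤ), f (x + latVec k) = f x

/-- The quotient (flat) metric on the torus `𝕋^d`, expressed on representatives in `ℝ^d`. -/
def tdist {d : ℕ} (x y : Fin d → ℝ) : ℝ := ⨅ k : Fin d → ℤ, euclNorm (x - y + latVec k)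

/-- The gradient of a scalar function on `ℝ^d`, as an `ℝ^d`-valued function. -/
def grad {d : ℕ} (U : (Fin d → ℝ) → ℝ) (x : Fin d → ℝ) : Fin d → ℝ :=
  fun i => fderiv ℝ U x (Pi.single i 1)

/-- The Laplacian: the sum of the second partial derivatives. -/
def lap {d : ℕ} (U : (Fin d → ℝ) → ℝ) (x : Fin d → ℝ) : ℝ :=
  ∑ i, fderiv ℝ (fun y => fderiv ℝ U y (Pi.single i 1)) x (Pi.single i 1)

/-- The Hessian matrix of second partial derivatives. -/
def hess {d : ℕ} (U : (Fin d → ℝ) → ℝ) (x : Fin d → ℝ) : Fin d → Fin d → ℝ :=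
  fun i j => fderiv ℝ (fun y => fderiv ℝ U y (Pi.single j 1)) x (Pi.single i 1)

/-- Frobenius (Euclidean) norm of a `d × d` matrix. -/
def frobNorm {d : ℕ} (M : Fin d → Fin d → ℝ) : ℝ := Real.sqrt (∑ i, ∑ j, (M i j) ^ 2)

/-- Euclidean dot product on `ℝ^d`. -/
def dotP {d : ℕ} (v w : Fin d → ℝ) : ℝ := ∑ i, v i * w i

/-- `HolderBnd α u K` expresses that the Hölder norm `‖u‖_{C^{0,α}(𝕋^d)}`, i.e. the sup
norm plus the `α`-Hölder seminorm with respect to the torus metric, is at most `K`. -/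
def HolderBnd {d : ℕ} (α : ℝ) (u : (Fin d → ℝ) → ℝ) (K : ℝ) : Prop :=
  ∃ A B : ℝ, 0 ≤ A ∧ 0 ≤ B ∧ A + B ≤ K ∧ (∀ x, |u x| ≤ A) ∧
    ∀ x y, |u x - u y| ≤ B * tdist x y ^ α

/-- Hölder norm bound for an `ℝ^d`-valued function, with the Euclidean norm on values. -/
def HolderBndVec {d : ℕ} (α : ℝ) (G : (Fin d → ℝ) → Fin d → ℝ) (K : ℝ) : Prop :=
  ∃ A B : ℝ, 0 ≤ A ∧ 0 ≤ B ∧ A + B ≤ K ∧ (∀ x, euclNorm (G x) ≤ A) ∧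
    ∀ x y, euclNorm (G x - G y) ≤ B * tdist x y ^ α

/-- Hölder norm bound for a matrix-valued function. -/
def HolderBndMat {d : ℕ} (α : ℝ) (M : (Fin d → ℝ) → Fin d → Fin d → ℝ) (K : ℝ) : Prop :=
  ∃ A B : ℝ, 0 ≤ A ∧ 0 ≤ B ∧ A + B ≤ K ∧ (∀ x, frobNorm (M x) ≤ A) ∧
    ∀ x y, frobNorm (M x - M y) ≤ B * tdist x y ^ α

/-- `C1Bnd α u K` expresses `‖u‖_{C^{1,α}(𝕋^d)} ≤ K` (the `C^{0,α}` norm of `u` plus the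
`C^{0,α}` norm of its gradient is at most `K`). -/
def C1Bnd {d : ℕ} (α : ℝ) (u : (Fin d → ℝ) → ℝ) (K : ℝ) : Prop :=
  ∃ K₀ K₁ : ℝ, 0 ≤ K₀ ∧ 0 ≤ K₁ ∧ K₀ + K₁ ≤ K ∧
    HolderBnd α u K₀ ∧ HolderBndVec α (grad u) K₁

/-- `C2Bnd α u K` expresses that the second derivatives of `u` are `α`-Hölder continuous
and `‖u‖_{C^{2,α}(𝕋^d)} ≤ K`. -/
def C2Bnd {d : ℕ} (α : ℝ) (u : (Fin d → ℝ) → ℝ) (K : ℝ) : Prop :=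
  ∃ K₀ K₁ K₂ : ℝ, 0 ≤ K₀ ∧ 0 ≤ K₁ ∧ 0 ≤ K₂ ∧ K₀ + K₁ + K₂ ≤ K ∧
    HolderBnd α u K₀ ∧ HolderBndVec α (grad u) K₁ ∧ HolderBndMat α (hess u) K₂

/-- A coupling of two measures: a measure on the product whose marginals are `μ` and `ν`. -/
def IsCoupling {X : Type*} [MeasurableSpace X] (cpl : Measure (X × X)) (μ ν : Measure X) : Prop :=
  cpl.map Prod.fst = μ ∧ cpl.map Prod.snd = ν

/-- `W_q^q`: the `q`-th power of the Wasserstein distance of order `q` on the torus,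
defined as the infimum over couplings of the integral of the `q`-th power of the torus
distance. -/
def WassPow {d : ℕ} (q : ℝ) (μ ν : Measure (Fin d → ℝ)) : ℝ :=
  sInf { c | ∃ cpl : Measure ((Fin d → ℝ) × (Fin d → ℝ)), IsProbabilityMeasure cpl ∧
    IsCoupling cpl μ ν ∧ c = ∫ z, tdist z.1 z.2 ^ q ∂cpl }

/-- The Wasserstein distance of order `p` on the torus. -/
def Wass {d : ℕ} (p : ℝ) (μ ν : Measure (Fin d → ℝ)) : ℝ :=
  sInf { c | ∃ cpl : Measure ((Fin d → ℝ) × (Fin d → ℝ)), IsProbabilityMeasure cpl ∧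
    IsCoupling cpl μ ν ∧ c = (∫ z, tdist z.1 z.2 ^ p ∂cpl) ^ (1/p) }

/-- The measure `h dx` on the torus associated to a density `h`. -/
def densMeasure {d : ℕ} (h : (Fin d → ℝ) → ℝ) : Measure (Fin d → ℝ) :=
  (torusMeasure d).withDensity fun x => ENNReal.ofReal (h x)

/-- The `L^p(𝕋^d)` norm (as a real number). -/
def LpNorm {d : ℕ} (p : ℝ≥0∞) (u : (Fin d → ℝ) → ℝ) : ℝ :=
  (eLpNorm u p (torusMeasure d)).toReal

/-- `U` is a weak solution of `ε² Δ U = g` on the torus: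
`ε² ∫ ∇U·∇φ dx = −∫ g φ dx` for every smooth (periodic) test function `φ`. -/
def IsWeakPoisson {d : ℕ} (ε : ℝ) (U g : (Fin d → ℝ) → ℝ) : Prop :=
  ∀ φ : (Fin d → ℝ) → ℝ, ContDiff ℝ (⊤ : ℕ∞) φ → ZPeriodic φ →
    ε ^ 2 * ∫ x, dotP (grad U x) (grad φ x) ∂(torusMeasure d) =
      - ∫ x, g x * φ x ∂(torusMeasure d)

end
noncomputable section

/-- The rescaled mollifier `χ_r(x) = r^{-d} χ(x/r)` on `ℝ^d`. -/
def scaledMollifier {d : ℕ} (χ : (Fin d → ℝ) → ℝ) (r : ℝ) (x : Fin d → ℝ) : ℝ :=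
  (r ^ d)⁻¹ * χ (fun i => x i / r)

/-- The `ℤ^d`-periodisation of a function on `ℝ^d`, giving a function on the torus. -/
def periodised {d : ℕ} (g : (Fin d → ℝ) → ℝ) (x : Fin d → ℝ) : ℝ :=
  ∑' k : Fin d → ℤ, g (x + latVec k)

/-- The measure `χ_r ∗ μ` on the torus: the measure with density
`x ↦ ∫ χ_r(x − y) dμ(y)` with respect to the Haar measure (with `χ_r` periodised). -/
def mollifyMeasure {d : ℕ} (χ : (Fin d → ℝ) → ℝ) (r : ℝ) (μ : Measure (Fin d → ℝ)) :
    Measure (Fin d → ℝ) :=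
  (torusMeasure d).withDensity fun x =>
    ENNReal.ofReal (∫ y, periodised (scaledMollifier χ r) (x - y) ∂μ)

/-- A Borel probability measure on the torus `𝕋^d`, realised as a probability measure on
`ℝ^d` carried by the fundamental domain. -/
def IsTorusProb {d : ℕ} (μ : Measure (Fin d → ℝ)) : Prop :=
  IsProbabilityMeasure μ ∧ μ (Tcube d)ᶜ = 0

/-- The set `A_d` of allowed Hölder exponents: `(0,1)` if `d = 2`, `(0,1/5]` if `d = 3`. -/
def Aset (d : ℕ) : Set ℝ := if d = 2 then Set.Ioo 0 1 else Set.Ioc 0 (1/5)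

end

/-!
Let `M` bound both densities and put `u = U₁ - U₂`. Lifting to `ℝ^d`, a maximiser `ψ` of the
periodic dual problem for the quadratic cost gives, through its `c`-transform `φ`, the map
`T = x - ∇φ` from `μ₁` to `μ₂`, with transport cost `∫ |T x - x|² dμ₁` at most `W₂²` by weak
duality. The interpolation `X_θ = (1 - θ) x + θ T` has a Lipschitz inverse `P`, and
`Q = θ⁻¹ (z - (1 - θ) P)` sends `X_θ x` to `T x`. Almost everywhere `(1 - θ) P' + θ Q' = 1` with
`P'` and `Q'` positive semidefinite, so one of the two has trace at most `d`, hence determinant at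
most `1` by the inequality of arithmetic and geometric means. Comparing with `μ₁` through `P` or
with `μ₂` through `Q` accordingly, the law of `X_θ` has density at most `M`; this avoids the
Monge–Ampère equation and any regularity of `T`. Differentiating `∫ u(X_θ) dμ₁` in `θ` and using
the Cauchy–Schwarz inequality, `(∫ u d(μ₂ - μ₁))² ≤ M ‖∇u‖² W₂²`, while testing the weak equation
with `u` itself gives `ε² ‖∇u‖² = ∫ u d(μ₂ - μ₁)`.
-/

open Filter InnerProductSpace
open scoped NNReal Topology

/-! ### Periodic functions -/

/-- Invariance of `f` under translation by the elements of `L`: these are the functions on the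
quotient `E ⧸ L`. -/
def PeriodicMod {E α : Type*} [AddGroup E] (L : AddSubgroup E) (f : E → α) : Prop :=
  ∀ l ∈ L, Function.Periodic f l

theorem PeriodicMod.add_const_mul {E : Type*} [AddGroup E] {L : AddSubgroup E} {f g : E → ℝ}
    (hf : PeriodicMod L f) (hg : PeriodicMod L g) (t : ℝ) :
    PeriodicMod L fun x => f x + t * g x :=
  fun l hl x => by simp only [hf l hl x, hg l hl x]

/-- The translates by `L` of the closed ball of radius `R` cover `E`; for proper `E` this makes
`E ⧸ L` compact. -/
def CoveringRadiusLE {E : Type*} [SeminormedAddCommGroup E] (L : AddSubgroup E) (R : ℝ) : Prop :=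
  ∀ x, ∃ l ∈ L, ‖x + l‖ ≤ R

namespace CoveringRadiusLE

variable {E F : Type*} [SeminormedAddCommGroup E] [NormedAddCommGroup F]
  {L : AddSubgroup E} {R : ℝ}

theorem nonneg (hL : CoveringRadiusLE L R) : 0 ≤ R :=
  let ⟨_, _, h⟩ := hL 0
  (norm_nonneg _).trans h

theorem exists_norm_sub_le (hL : CoveringRadiusLE L R) (x y : E) :
    ∃ l ∈ L, ‖x - (y + l)‖ ≤ R ∧ ‖x - (y + l)‖ ≤ ‖x - y‖ := by
  obtain hxy | hxy := le_total ‖x - y‖ R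
  · exact ⟨0, L.zero_mem, by simpa using hxy, by simp⟩
  · obtain ⟨l, hl, hle⟩ := hL (x - y)
    have hsub : x - (y + -l) = x - y + l := by abel
    exact ⟨-l, L.neg_mem hl, hsub ▸ hle, hsub ▸ hle.trans hxy⟩

theorem exists_eq_and_norm_sub_le {α : Type*} {f : E → α} (hL : CoveringRadiusLE L R)
    (hf : PeriodicMod L f) (x y : E) :
    ∃ y', f y' = f y ∧ ‖x - y'‖ ≤ R ∧ ‖x - y'‖ ≤ ‖x - y‖ :=
  let ⟨l, hl, h⟩ := hL.exists_norm_sub_le x y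
  ⟨y + l, hf l hl y, h⟩

variable [ProperSpace E] {f : E → F}

theorem exists_norm_le (hL : CoveringRadiusLE L R) (hf : Continuous f) (hper : PeriodicMod L f) :
    ∃ B, ∀ y, ‖f y‖ ≤ B := by
  obtain ⟨B, hB⟩ := (isCompact_closedBall (0 : E) R).exists_bound_of_continuousOn hf.continuousOn
  refine ⟨B, fun y => ?_⟩
  obtain ⟨y', hy', hle, -⟩ := hL.exists_eq_and_norm_sub_le hper 0 y
  exact hy' ▸ hB y' (by simpa using hle)

theorem bddAbove_range {f : E → ℝ} (hL : CoveringRadiusLE L R) (hf : Continuous f)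
    (hper : PeriodicMod L f) : BddAbove (range f) := by
  obtain ⟨B, hB⟩ := hL.exists_norm_le hf hper
  exact ⟨B, forall_mem_range.2 fun y => (le_abs_self _).trans (hB y)⟩

theorem uniformContinuous (hL : CoveringRadiusLE L R) (hf : Continuous f)
    (hper : PeriodicMod L f) : UniformContinuous f := by
  rw [Metric.uniformContinuous_iff]
  intro δ hδ
  obtain ⟨η, hη, hlt⟩ := Metric.uniformContinuousOn_iff.1
    ((isCompact_closedBall (0 : E) (R + 1)).uniformContinuousOn_of_continuous hf.continuousOn) δ hδ
  refine ⟨min η 1, by positivity, fun {x y} hxy => ?_⟩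
  obtain ⟨l, hl, hx⟩ := hL x
  have hdist : dist (x + l) (y + l) < min η 1 := by rwa [dist_add_right]
  have hy : ‖y + l‖ ≤ R + 1 := by
    have := norm_sub_norm_le (y + l) (x + l)
    rw [← dist_eq_norm, dist_comm] at this
    linarith [min_le_right η 1]
  rw [← hper l hl x, ← hper l hl y]
  exact hlt _ (by simpa using hx.trans (by linarith)) _ (by simpa using hy)
    (hdist.trans_le (min_le_left _ _))

theorem integrable_comp [MeasurableSpace E] [OpensMeasurableSpace E] {Ω : Type*}
    [MeasurableSpace Ω] {μ : Measure Ω} [IsFiniteMeasure μ] {g : Ω → E}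
    (hL : CoveringRadiusLE L R) (hf : Continuous f) (hper : PeriodicMod L f)
    (hg : Measurable g) : Integrable (fun x => f (g x)) μ := by
  obtain ⟨B, hB⟩ := hL.exists_norm_le hf hper
  exact .of_bound (hf.comp_aestronglyMeasurable hg.aestronglyMeasurable) B
    (ae_of_all _ fun x => hB (g x))

theorem integrable [MeasurableSpace E] [OpensMeasurableSpace E] {μ : Measure E}
    [IsFiniteMeasure μ] (hL : CoveringRadiusLE L R) (hf : Continuous f) (hper : PeriodicMod L f) :
    Integrable f μ :=
  hL.integrable_comp hf hper measurable_id

end CoveringRadiusLE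

/-! ### The squared distance -/

theorem hasGradientAt_half_norm_sub_sq {E : Type*} [NormedAddCommGroup E] [InnerProductSpace ℝ E]
    [CompleteSpace E] (x y : E) : HasGradientAt (fun z => ‖z - y‖ ^ 2 / 2) (x - y) x := by
  rw [hasGradientAt_iff_hasFDerivAt]
  have h := ((hasFDerivAt_id x).sub_const y).norm_sq.mul_const (1 / 2)
  simp only [id_eq, mul_one_div] at h
  refine h.congr_fderiv ?_
  ext z
  simp

/-! ### The `c`-transform for the quadratic cost -/

/-- The `c`-transform of `ψ` for the cost `c(x, y) = ‖x - y‖ ^ 2 / 2`. The infimum is a junk value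
unless `ψ` is bounded above by a quadratic; it is used for bounded `ψ`. -/
noncomputable def cTransform {E : Type*} [Norm E] [Sub E] (ψ : E → ℝ) (x : E) : ℝ :=
  ⨅ y, (‖x - y‖ ^ 2 / 2 - ψ y)

/-- The points at which the infimum defining `cTransform ψ x` is attained: the `c`-superdifferential
of `cTransform ψ` at `x`. -/
def contactSet {E : Type*} [Norm E] [Sub E] (ψ : E → ℝ) (x : E) : Set E :=
  {y | ‖x - y‖ ^ 2 / 2 - ψ y = cTransform ψ x}

theorem mem_contactSet_of_forall_le {E : Type*} [SeminormedAddCommGroup E] {ψ : E → ℝ} {x y : E}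
    (h : ∀ w, ‖x - y‖ ^ 2 / 2 - ψ y ≤ ‖x - w‖ ^ 2 / 2 - ψ w) : y ∈ contactSet ψ x :=
  le_antisymm (le_ciInf h) (ciInf_le ⟨_, forall_mem_range.2 h⟩ y)

namespace cTransform

section Seminormed

variable {E : Type*} [SeminormedAddCommGroup E] {L : AddSubgroup E} {R : ℝ} {ψ ψ' : E → ℝ}

theorem le (hψ : BddAbove (range ψ)) (x y : E) : cTransform ψ x ≤ ‖x - y‖ ^ 2 / 2 - ψ y := by
  obtain ⟨B, hB⟩ := hψ
  refine ciInf_le ⟨-B, forall_mem_range.2 fun z => ?_⟩ y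
  linarith [sq_nonneg ‖x - z‖, hB (mem_range_self z)]

theorem periodicMod (hψ : PeriodicMod L ψ) : PeriodicMod L (cTransform ψ) := by
  intro l hl x
  refine ((Equiv.addRight l).iInf_congr fun y => ?_).symm
  rw [Equiv.coe_addRight, add_sub_add_right_eq_sub, hψ l hl]

theorem le_add_of_le_add {δ : ℝ} (hψ' : BddAbove (range ψ')) (h : ∀ y, ψ y ≤ ψ' y + δ) (x : E) :
    cTransform ψ' x ≤ cTransform ψ x + δ := by
  rw [← sub_le_iff_le_add]
  exact le_ciInf fun y => by linarith [le hψ' x y, h y]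

theorem abs_sub_le {δ : ℝ} (hψ : BddAbove (range ψ)) (hψ' : BddAbove (range ψ'))
    (h : ∀ y, |ψ y - ψ' y| ≤ δ) (x : E) : |cTransform ψ x - cTransform ψ' x| ≤ δ := by
  have h₁ := le_add_of_le_add hψ' (fun y => sub_le_iff_le_add'.1 (abs_le.1 (h y)).2) x
  have h₂ := le_add_of_le_add hψ (fun y => neg_le_sub_iff_le_add.1 (abs_le.1 (h y)).1) x
  exact abs_le.2 ⟨by linarith, by linarith⟩

theorem sub_const (hψ : BddAbove (range ψ)) (c : ℝ) (x : E) :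
    cTransform (fun y => ψ y - c) x = cTransform ψ x + c := by
  have hc : BddAbove (range fun y => ψ y - c) := by
    obtain ⟨B, hB⟩ := hψ
    exact ⟨B - c, forall_mem_range.2 fun y => sub_le_sub_right (hB (mem_range_self y)) c⟩
  have h₁ : cTransform (fun y => ψ y - c) x ≤ cTransform ψ x + c :=
    le_add_of_le_add hc (fun y => (sub_add_cancel _ _).ge) x
  have h₂ : cTransform ψ x ≤ cTransform (fun y => ψ y - c) x + -c :=
    le_add_of_le_add hψ (fun y => (sub_eq_add_neg _ _).le) x
  exact le_antisymm h₁ (by linarith)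

theorem le_cTransform_cTransform (hψ : BddAbove (range ψ)) (y : E) :
    ψ y ≤ cTransform (cTransform ψ) y :=
  le_ciInf fun x => by
    rw [le_sub_comm, norm_sub_rev]
    exact le hψ x y

theorem dist_le_of_norm_sub_le (hL : CoveringRadiusLE L R) (hψ : BddAbove (range ψ))
    (hper : PeriodicMod L ψ) {x x' : E} (hx : ‖x - x'‖ ≤ R) :
    dist (cTransform ψ x) (cTransform ψ x') ≤ 2 * R * dist x x' := by
  have key : ∀ {u v : E}, ‖u - v‖ ≤ R → cTransform ψ u - cTransform ψ v ≤ 2 * R * ‖u - v‖ := by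
    intro u v huv
    rw [sub_le_comm]
    refine le_ciInf fun y => ?_
    obtain ⟨y', hy', hR, hle⟩ := hL.exists_eq_and_norm_sub_le hper v y
    have hsq : ‖u - y'‖ ^ 2 ≤ (‖u - v‖ + ‖v - y'‖) ^ 2 := by
      gcongr
      exact norm_sub_le_norm_sub_add_norm_sub ..
    have hsq' : ‖v - y'‖ ^ 2 ≤ ‖v - y‖ ^ 2 := by gcongr
    nlinarith [le hψ u y', norm_nonneg (u - v), norm_nonneg (v - y')]
  rw [dist_eq_norm, dist_eq_norm, Real.norm_eq_abs, abs_sub_le_iff]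
  exact ⟨key hx, norm_sub_rev x x' ▸ key (norm_sub_rev x x' ▸ hx)⟩

theorem lipschitzWith (hL : CoveringRadiusLE L R) (hψ : BddAbove (range ψ))
    (hper : PeriodicMod L ψ) : LipschitzWith (2 * R).toNNReal (cTransform ψ) := by
  refine LipschitzWith.of_dist_le' fun x x' => ?_
  obtain ⟨x'', heq, hR, hle⟩ := hL.exists_eq_and_norm_sub_le (periodicMod hper) x x'
  rw [← heq]
  refine (dist_le_of_norm_sub_le hL hψ hper hR).trans ?_
  rw [dist_eq_norm, dist_eq_norm]
  exact mul_le_mul_of_nonneg_left hle (mul_nonneg zero_le_two hL.nonneg)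

theorem continuous (hL : CoveringRadiusLE L R) (hψ : BddAbove (range ψ))
    (hper : PeriodicMod L ψ) : Continuous (cTransform ψ) :=
  (lipschitzWith hL hψ hper).continuous

theorem exists_mem_contactSet [ProperSpace E] (hL : CoveringRadiusLE L R) (hψ : Continuous ψ)
    (hper : PeriodicMod L ψ) (x : E) : ∃ y ∈ contactSet ψ x, ‖x - y‖ ≤ R := by
  obtain ⟨y, hyR, hmin⟩ := (isCompact_closedBall x R).exists_isMinOn
    (Metric.nonempty_closedBall.2 hL.nonneg)
    (f := fun y => ‖x - y‖ ^ 2 / 2 - ψ y) (by fun_prop)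
  refine ⟨y, mem_contactSet_of_forall_le fun z => ?_, by rwa [mem_closedBall_iff_norm'] at hyR⟩
  obtain ⟨z', hz', hzR, hle⟩ := hL.exists_eq_and_norm_sub_le hper x z
  have hsq : ‖x - z'‖ ^ 2 ≤ ‖x - z‖ ^ 2 := by gcongr
  have := isMinOn_iff.1 hmin z' (mem_closedBall_iff_norm'.2 hzR)
  linarith

end Seminormed

section Inner

variable {E : Type*} [NormedAddCommGroup E] [InnerProductSpace ℝ E] {ψ : E → ℝ}

/-- At a contact point `y` the function `z ↦ ‖z - y‖ ^ 2 / 2 - cTransform ψ z` is minimal at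
`z = x`. -/
theorem eq_sub_gradient_of_mem_contactSet [CompleteSpace E] (hψ : BddAbove (range ψ)) {x y : E}
    (hy : y ∈ contactSet ψ x) (hd : DifferentiableAt ℝ (cTransform ψ) x) :
    y = x - gradient (cTransform ψ) x := by
  have hmin : IsLocalMin (fun z => ‖z - y‖ ^ 2 / 2 - cTransform ψ z) x :=
    Eventually.of_forall fun z => by
      have hy' : ‖x - y‖ ^ 2 / 2 - ψ y = cTransform ψ x := hy
      linarith [le hψ z y]
  have hgrad := (hasGradientAt_half_norm_sub_sq x y).hasFDerivAt.sub
    hd.hasGradientAt.hasFDerivAt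
  have h0 := hmin.hasFDerivAt_eq_zero hgrad
  rw [← map_sub, LinearIsometryEquiv.map_eq_zero_iff, sub_eq_zero, sub_eq_iff_eq_add] at h0
  exact eq_sub_of_add_eq' h0.symm

theorem convexOn_half_norm_sq_sub (hψ : BddAbove (range ψ)) :
    ConvexOn ℝ univ fun x => ‖x‖ ^ 2 / 2 - cTransform ψ x := by
  refine ⟨convex_univ, fun x _ y _ a b ha hb hab => ?_⟩
  have key : cTransform ψ (a • x + b • y) ≥ ‖a • x + b • y‖ ^ 2 / 2 -
      (a • (‖x‖ ^ 2 / 2 - cTransform ψ x) + b • (‖y‖ ^ 2 / 2 - cTransform ψ y)) := by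
    refine le_ciInf fun w => ?_
    have hx := mul_le_mul_of_nonneg_left (le hψ x w) ha
    have hy := mul_le_mul_of_nonneg_left (le hψ y w) hb
    obtain rfl : b = 1 - a := by linarith
    simp only [norm_sub_sq_real, inner_add_left, real_inner_smul_left, smul_eq_mul] at hx hy ⊢
    linarith
  linarith

end Inner

end cTransform

/-! ### The dual transport problem -/

/-- The dual functional of the transport problem from `μ₁` to `μ₂` with cost `‖x - y‖ ^ 2 / 2`. -/
noncomputable def dualFunctional {E : Type*} [Norm E] [Sub E] [MeasurableSpace E]
    (μ₁ μ₂ : Measure E) (ψ : E → ℝ) : ℝ :=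
  ∫ x, cTransform ψ x ∂μ₁ + ∫ y, ψ y ∂μ₂

/-- `ψ` is a Kantorovich potential: it maximises the dual functional among all continuous functions
on `E ⧸ L`. -/
structure IsDualMaximizer {E : Type*} [SeminormedAddCommGroup E] [MeasurableSpace E]
    (L : AddSubgroup E) (μ₁ μ₂ : Measure E) (ψ : E → ℝ) : Prop where
  continuous : Continuous ψ
  periodicMod : PeriodicMod L ψ
  dualFunctional_le : ∀ ψ' : E → ℝ, Continuous ψ' → PeriodicMod L ψ' →
    dualFunctional μ₁ μ₂ ψ' ≤ dualFunctional μ₁ μ₂ ψ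

/-- The `κ`-Lipschitz functions on `E ⧸ L` vanishing at `0`, a compact set of candidates in the
dual problem. -/
def normalizedPotentials {E : Type*} [SeminormedAddCommGroup E] (L : AddSubgroup E) (κ : ℝ≥0) :
    Set C(E, ℝ) :=
  {ψ | LipschitzWith κ ψ ∧ PeriodicMod L ψ ∧ ψ 0 = 0}

theorem isCompact_normalizedPotentials {E : Type*} [SeminormedAddCommGroup E]
    (L : AddSubgroup E) (κ : ℝ≥0) : IsCompact (normalizedPotentials L κ) := by
  refine ArzelaAscoli.isCompact_of_equicontinuous _ ?_
    (LipschitzWith.uniformEquicontinuous _ κ fun ψ => ψ.2.1).equicontinuous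
  have himage : ContinuousMap.toFun '' normalizedPotentials L κ =
      {f : E → ℝ | LipschitzWith κ f ∧ PeriodicMod L f ∧ f 0 = 0} := by
    ext f
    refine ⟨?_, fun hf => ⟨⟨f, hf.1.continuous⟩, hf, rfl⟩⟩
    rintro ⟨ψ, hψ, rfl⟩
    exact hψ
  have hclosed : IsClosed {f : E → ℝ | LipschitzWith κ f ∧ PeriodicMod L f ∧ f 0 = 0} := by
    simp only [lipschitzWith_iff_dist_le_mul, PeriodicMod, Function.Periodic, ofPred_and,
      ofPred_forall]
    refine .inter ?_ (.inter ?_ ?_)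
    · exact isClosed_iInter fun x => isClosed_iInter fun y =>
        isClosed_le (by fun_prop) continuous_const
    · exact isClosed_iInter fun l => isClosed_iInter fun _ => isClosed_iInter fun x =>
        isClosed_eq (by fun_prop) (by fun_prop)
    · exact isClosed_eq (by fun_prop) continuous_const
  rw [himage]
  refine (isCompact_univ_pi fun x => isCompact_closedBall (0 : ℝ) (κ * dist x 0)).of_isClosed_subset
    hclosed fun f hf x _ => ?_
  simpa [hf.2.2] using hf.1.dist_le_mul x 0

section DualProblem

variable {E : Type*} [SeminormedAddCommGroup E] [ProperSpace E] [MeasurableSpace E] [BorelSpace E]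
  {L : AddSubgroup E} {R : ℝ} {μ₁ μ₂ : Measure E} [IsProbabilityMeasure μ₁]
  [IsProbabilityMeasure μ₂] {ψ ψ' : E → ℝ}

theorem integrable_cTransform (hL : CoveringRadiusLE L R) (hψ : Continuous ψ)
    (hper : PeriodicMod L ψ) : Integrable (cTransform ψ) μ₁ :=
  hL.integrable (cTransform.continuous hL (hL.bddAbove_range hψ hper) hper)
    (cTransform.periodicMod hper)

theorem dualFunctional_sub_const (hL : CoveringRadiusLE L R) (hψ : Continuous ψ)
    (hper : PeriodicMod L ψ) (c : ℝ) :
    dualFunctional μ₁ μ₂ (fun y => ψ y - c) = dualFunctional μ₁ μ₂ ψ := by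
  have hint : Integrable ψ μ₂ := hL.integrable hψ hper
  simp only [dualFunctional, cTransform.sub_const (hL.bddAbove_range hψ hper)]
  rw [integral_add (integrable_cTransform hL hψ hper) (integrable_const c),
    integral_sub hint (integrable_const c)]
  simp

theorem dualFunctional_le_cTransform_cTransform (hL : CoveringRadiusLE L R) (hψ : Continuous ψ)
    (hper : PeriodicMod L ψ) :
    dualFunctional μ₁ μ₂ ψ ≤ dualFunctional μ₁ μ₂ (cTransform (cTransform ψ)) := by
  have hbdd := hL.bddAbove_range hψ hper
  have hcont := cTransform.continuous hL hbdd hper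
  have hper' := cTransform.periodicMod hper
  have hbdd' := hL.bddAbove_range hcont hper'
  have hcont' := cTransform.continuous hL hbdd' hper'
  have hper'' := cTransform.periodicMod hper'
  exact add_le_add
    (integral_mono (integrable_cTransform hL hψ hper) (integrable_cTransform hL hcont' hper'')
      (cTransform.le_cTransform_cTransform hbdd'))
    (integral_mono (hL.integrable hψ hper)
      (integrable_cTransform hL hcont hper') (cTransform.le_cTransform_cTransform hbdd))

theorem abs_dualFunctional_sub_le (hL : CoveringRadiusLE L R) (hψ : Continuous ψ)
    (hper : PeriodicMod L ψ) (hψ' : Continuous ψ') (hper' : PeriodicMod L ψ') {δ : ℝ}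
    (h : ∀ y, |ψ y - ψ' y| ≤ δ) :
    |dualFunctional μ₁ μ₂ ψ - dualFunctional μ₁ μ₂ ψ'| ≤ 2 * δ := by
  have h₁ := norm_integral_le_of_norm_le_const (μ := μ₁)
    (f := fun x => cTransform ψ x - cTransform ψ' x) (ae_of_all _
    (cTransform.abs_sub_le (hL.bddAbove_range hψ hper) (hL.bddAbove_range hψ' hper') h))
  have h₂ := norm_integral_le_of_norm_le_const (μ := μ₂)
    (f := fun y => ψ y - ψ' y) (ae_of_all _ h)
  rw [integral_sub (integrable_cTransform hL hψ hper) (integrable_cTransform hL hψ' hper')] at h₁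
  rw [integral_sub (hL.integrable hψ hper)
    (hL.integrable hψ' hper')] at h₂
  simp only [probReal_univ, mul_one, Real.norm_eq_abs] at h₁ h₂
  rw [dualFunctional, dualFunctional, add_sub_add_comm, two_mul]
  exact (abs_add_le _ _).trans (add_le_add h₁ h₂)

theorem continuousOn_dualFunctional (hL : CoveringRadiusLE L R) (κ : ℝ≥0) :
    ContinuousOn (fun ψ : C(E, ℝ) => dualFunctional μ₁ μ₂ ψ) (normalizedPotentials L κ) := by
  intro ψ₀ hψ₀
  refine Metric.tendsto_nhds.2 fun δ hδ => ?_
  have huniform := Metric.tendstoUniformlyOn_iff.1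
    (ContinuousMap.tendsto_iff_forall_isCompact_tendstoUniformlyOn.1
      (tendsto_id'.2 (nhdsWithin_le_nhds (a := ψ₀) (s := normalizedPotentials L κ)))
      _ (isCompact_closedBall (0 : E) R)) (δ / 4) (by positivity)
  filter_upwards [huniform, self_mem_nhdsWithin] with ψ hclose hψ
  have hclose' : ∀ y, |ψ y - ψ₀ y| ≤ δ / 4 := fun y => by
    obtain ⟨l, hl, hle⟩ := hL y
    rw [← hψ.2.1 l hl y, ← hψ₀.2.1 l hl y, ← Real.dist_eq, dist_comm]
    exact (hclose (y + l) (by simpa using hle)).le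
  have := abs_dualFunctional_sub_le (μ₁ := μ₁) (μ₂ := μ₂) hL ψ.continuous hψ.2.1 ψ₀.continuous
    hψ₀.2.1 hclose'
  rw [Real.dist_eq]
  linarith

theorem exists_isDualMaximizer (hL : CoveringRadiusLE L R) (μ₁ μ₂ : Measure E)
    [IsProbabilityMeasure μ₁] [IsProbabilityMeasure μ₂] :
    ∃ ψ, IsDualMaximizer L μ₁ μ₂ ψ := by
  obtain ⟨ψ, hψ, hmax⟩ := (isCompact_normalizedPotentials L (2 * R).toNNReal).exists_isMaxOn
    ⟨0, LipschitzWith.const' 0, fun _ _ _ => rfl, rfl⟩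
    (continuousOn_dualFunctional (μ₁ := μ₁) (μ₂ := μ₂) hL _)
  refine ⟨ψ, ψ.continuous, hψ.2.1, fun ψ' hψ' hper' => ?_⟩
  have hbdd' := hL.bddAbove_range hψ' hper'
  have hper'' := cTransform.periodicMod hper'
  have hcont'' := cTransform.continuous hL hbdd' hper'
  have hlip := cTransform.lipschitzWith hL (hL.bddAbove_range hcont'' hper'') hper''
  have hper''' := cTransform.periodicMod hper''
  set χ := cTransform (cTransform ψ')
  have hmem : (⟨fun y => χ y - χ 0, hlip.continuous.sub continuous_const⟩ : C(E, ℝ)) ∈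
      normalizedPotentials L (2 * R).toNNReal :=
    ⟨.of_dist_le_mul fun x y => by simpa using hlip.dist_le_mul x y,
      fun l hl x => congrArg (· - χ 0) (hper''' l hl x), sub_self _⟩
  calc dualFunctional μ₁ μ₂ ψ' ≤ dualFunctional μ₁ μ₂ χ :=
        dualFunctional_le_cTransform_cTransform hL hψ' hper'
    _ = dualFunctional μ₁ μ₂ fun y => χ y - χ 0 :=
        (dualFunctional_sub_const hL hlip.continuous hper''' _).symm
    _ ≤ dualFunctional μ₁ μ₂ ψ := hmax hmem

end DualProblem

/-! ### The optimal transport map -/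

theorem measurable_gradient {E : Type*} [NormedAddCommGroup E] [InnerProductSpace ℝ E]
    [CompleteSpace E] [MeasurableSpace E] [BorelSpace E] (f : E → ℝ) : Measurable (gradient f) :=
  (toDual ℝ E).symm.continuous.measurable.comp (measurable_fderiv ℝ f)

theorem tendsto_of_tendsto_cost {E ι : Type*} [SeminormedAddCommGroup E] [ProperSpace E]
    {ψ : E → ℝ} (hψ : Continuous ψ) {x y₀ : E} (huniq : ∀ y ∈ contactSet ψ x, y = y₀)
    {y : ι → E} {l : Filter ι} {R : ℝ} (hy : ∀ᶠ i in l, ‖x - y i‖ ≤ R)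
    (hlim : Tendsto (fun i => ‖x - y i‖ ^ 2 / 2 - ψ (y i)) l (𝓝 (cTransform ψ x))) :
    Tendsto y l (𝓝 y₀) := by
  refine (isCompact_closedBall x R).tendsto_nhds_of_unique_mapClusterPt
    (hy.mono fun i hi => mem_closedBall_iff_norm'.2 hi) fun z _ hz => huniq z ?_
  obtain ⟨U, hU, hzU⟩ := mapClusterPt_iff_ultrafilter.1 hz
  have hcost : Continuous fun w => ‖x - w‖ ^ 2 / 2 - ψ w := by fun_prop
  exact tendsto_nhds_unique ((hcost.tendsto z).comp hzU) (hlim.mono_left hU)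

/-- The map `x ↦ x - ∇(cTransform ψ)(x)`, which is the optimal transport map when `ψ` is a
Kantorovich potential. -/
noncomputable def transportMap {E : Type*} [NormedAddCommGroup E] [InnerProductSpace ℝ E]
    [CompleteSpace E] (ψ : E → ℝ) (x : E) : E :=
  x - gradient (cTransform ψ) x

section TransportMap

variable {E : Type*} [NormedAddCommGroup E] [InnerProductSpace ℝ E] [FiniteDimensional ℝ E]
  {L : AddSubgroup E} {R : ℝ} {ψ η : E → ℝ} {x : E}

theorem eq_transportMap_of_mem_contactSet (hψ : BddAbove (range ψ)) {y : E}
    (hd : DifferentiableAt ℝ (cTransform ψ) x) (hy : y ∈ contactSet ψ x) :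
    y = transportMap ψ x :=
  cTransform.eq_sub_gradient_of_mem_contactSet hψ hy hd

theorem transportMap_mem_contactSet (hL : CoveringRadiusLE L R) (hψ : Continuous ψ)
    (hper : PeriodicMod L ψ) (hd : DifferentiableAt ℝ (cTransform ψ) x) :
    transportMap ψ x ∈ contactSet ψ x := by
  obtain ⟨y, hy, -⟩ := cTransform.exists_mem_contactSet hL hψ hper x
  rwa [← eq_transportMap_of_mem_contactSet (hL.bddAbove_range hψ hper) hd hy]

theorem cTransform_perturbation_le (hL : CoveringRadiusLE L R) (hψ : Continuous ψ)
    (hψper : PeriodicMod L ψ) (hη : Continuous η) (hηper : PeriodicMod L η)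
    (hd : DifferentiableAt ℝ (cTransform ψ) x) (t : ℝ) :
    cTransform (fun z => ψ z + t * η z) x ≤ cTransform ψ x - t * η (transportMap ψ x) := by
  have hT : ‖x - transportMap ψ x‖ ^ 2 / 2 - ψ (transportMap ψ x) = cTransform ψ x :=
    transportMap_mem_contactSet hL hψ hψper hd
  have := cTransform.le (hL.bddAbove_range (by fun_prop) (hψper.add_const_mul hηper t)) x
    (transportMap ψ x)
  linarith

theorem tendsto_of_mem_contactSet_perturbation (hL : CoveringRadiusLE L R) (hψ : Continuous ψ)
    (hψper : PeriodicMod L ψ) (hη : Continuous η) (hηper : PeriodicMod L η)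
    (hd : DifferentiableAt ℝ (cTransform ψ) x) {y : ℝ → E}
    (hy : ∀ t, y t ∈ contactSet (fun z => ψ z + t * η z) x) (hyR : ∀ t, ‖x - y t‖ ≤ R) :
    Tendsto y (𝓝 0) (𝓝 (transportMap ψ x)) := by
  have hbdd := hL.bddAbove_range hψ hψper
  obtain ⟨B, hB⟩ := hL.exists_norm_le hη hηper
  have hsmall : Tendsto (fun t : ℝ => |t| * B) (𝓝 0) (𝓝 0) := by
    simpa using (continuous_abs.mul_const B).tendsto 0
  have hmul (t : ℝ) (z : E) : |t * η z| ≤ |t| * B := by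
    rw [abs_mul]
    exact mul_le_mul_of_nonneg_left (hB z) (abs_nonneg t)
  refine tendsto_of_tendsto_cost hψ (fun z hz => eq_transportMap_of_mem_contactSet hbdd hd hz)
    (.of_forall hyR) (tendsto_of_tendsto_of_tendsto_of_le_of_le tendsto_const_nhds
      (h := fun t => cTransform ψ x + |t| * B + |t| * B)
      (by simpa using (tendsto_const_nhds.add hsmall).add hsmall)
      (fun t => cTransform.le hbdd x (y t)) fun t => ?_)
  have hyt : ‖x - y t‖ ^ 2 / 2 - (ψ (y t) + t * η (y t)) =
    cTransform (fun z => ψ z + t * η z) x := hy t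
  dsimp only
  linarith [cTransform_perturbation_le hL hψ hψper hη hηper hd t,
    (abs_le.1 (hmul t (y t))).2, (abs_le.1 (hmul t (transportMap ψ x))).1]

/-- The quotient lies between `-η` at a contact point of the perturbed potential and `-η` at the
contact point of `ψ`, and the former converges to the latter. -/
theorem tendsto_cTransform_perturbation (hL : CoveringRadiusLE L R) (hψ : Continuous ψ)
    (hψper : PeriodicMod L ψ) (hη : Continuous η) (hηper : PeriodicMod L η)
    (hd : DifferentiableAt ℝ (cTransform ψ) x) :
    Tendsto (fun t : ℝ => (cTransform (fun z => ψ z + t * η z) x - cTransform ψ x) / t)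
      (𝓝[>] 0) (𝓝 (-η (transportMap ψ x))) := by
  have hcont (t : ℝ) : Continuous fun z => ψ z + t * η z := by fun_prop
  choose y hy hyR using fun t =>
    cTransform.exists_mem_contactSet hL (hcont t) (hψper.add_const_mul hηper t) x
  have hylim : Tendsto y (𝓝[>] 0) (𝓝 (transportMap ψ x)) :=
    (tendsto_of_mem_contactSet_perturbation hL hψ hψper hη hηper hd hy hyR).mono_left
      nhdsWithin_le_nhds
  refine tendsto_of_tendsto_of_tendsto_of_le_of_le' ((hη.tendsto _).comp hylim).neg
    tendsto_const_nhds ?_ ?_ <;> filter_upwards [self_mem_nhdsWithin] with t (ht : 0 < t)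
  · have hyt : ‖x - y t‖ ^ 2 / 2 - (ψ (y t) + t * η (y t)) =
      cTransform (fun z => ψ z + t * η z) x := hy t
    rw [le_div_iff₀ ht, Function.comp_apply]
    linarith [cTransform.le (hL.bddAbove_range hψ hψper) x (y t)]
  · rw [div_le_iff₀ ht]
    linarith [cTransform_perturbation_le hL hψ hψper hη hηper hd t]

theorem abs_cTransform_perturbation_le (hL : CoveringRadiusLE L R) (hψ : Continuous ψ)
    (hψper : PeriodicMod L ψ) (hη : Continuous η) (hηper : PeriodicMod L η) {B t : ℝ}
    (hB : ∀ y, |η y| ≤ B) (ht : 0 < t) (x : E) :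
    |(cTransform (fun y => ψ y + t * η y) x - cTransform ψ x) / t| ≤ B := by
  have hbdd := hL.bddAbove_range (by fun_prop) (hψper.add_const_mul hηper t)
  rw [abs_div, abs_of_pos ht, div_le_iff₀ ht]
  refine cTransform.abs_sub_le hbdd (hL.bddAbove_range hψ hψper) (fun y => ?_) x
  rw [add_sub_cancel_left, abs_mul, abs_of_pos ht, mul_comm]
  exact mul_le_mul_of_nonneg_right (hB y) ht.le

variable [MeasurableSpace E] [BorelSpace E]

theorem measurable_transportMap (ψ : E → ℝ) : Measurable (transportMap ψ) :=
  measurable_id.sub (measurable_gradient _)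

variable {μ₁ μ₂ : Measure E} [IsProbabilityMeasure μ₁] [IsProbabilityMeasure μ₂]

theorem IsDualMaximizer.integral_le_integral_transportMap (hL : CoveringRadiusLE L R)
    (hψ : IsDualMaximizer L μ₁ μ₂ ψ) (hd : ∀ᵐ x ∂μ₁, DifferentiableAt ℝ (cTransform ψ) x)
    (hη : Continuous η) (hηper : PeriodicMod L η) :
    ∫ y, η y ∂μ₂ ≤ ∫ x, η (transportMap ψ x) ∂μ₁ := by
  have hcont : ∀ t : ℝ, Continuous fun y => ψ y + t * η y :=
    fun t => hψ.continuous.add (continuous_const.mul hη)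
  have hper : ∀ t : ℝ, PeriodicMod L fun y => ψ y + t * η y :=
    hψ.periodicMod.add_const_mul hηper
  have hint := integrable_cTransform (μ₁ := μ₁) hL hψ.continuous hψ.periodicMod
  have hintt := fun t => integrable_cTransform (μ₁ := μ₁) hL (hcont t) (hper t)
  obtain ⟨B, hB⟩ := hL.exists_norm_le hη hηper
  have hlim : Tendsto (fun t : ℝ =>
        ∫ x, (cTransform (fun y => ψ y + t * η y) x - cTransform ψ x) / t ∂μ₁)
      (𝓝[>] 0) (𝓝 (∫ x, -η (transportMap ψ x) ∂μ₁)) := by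
    refine tendsto_integral_filter_of_dominated_convergence (fun _ => B)
      (.of_forall fun t => (((hintt t).sub hint).div_const t).aestronglyMeasurable) ?_
      (integrable_const B) ?_
    · filter_upwards [self_mem_nhdsWithin] with t ht
      exact ae_of_all _ (abs_cTransform_perturbation_le hL hψ.continuous hψ.periodicMod hη hηper
        hB ht)
    · filter_upwards [hd] with x hx
      exact tendsto_cTransform_perturbation hL hψ.continuous hψ.periodicMod hη hηper hx
  have hle : ∀ᶠ t : ℝ in 𝓝[>] 0,
      ∫ x, (cTransform (fun y => ψ y + t * η y) x - cTransform ψ x) / t ∂μ₁ ≤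
        -∫ y, η y ∂μ₂ := by
    filter_upwards [self_mem_nhdsWithin] with t (ht : 0 < t)
    have hmax := hψ.dualFunctional_le _ (hcont t) (hper t)
    simp only [dualFunctional] at hmax
    rw [integral_add (hL.integrable hψ.continuous hψ.periodicMod)
      ((hL.integrable hη hηper).const_mul t), integral_const_mul] at hmax
    rw [integral_div, integral_sub (hintt t) hint, div_le_iff₀ ht]
    linarith
  have := le_of_tendsto hlim hle
  rwa [integral_neg, neg_le_neg_iff] at this

theorem IsDualMaximizer.integral_transportMap (hL : CoveringRadiusLE L R)
    (hψ : IsDualMaximizer L μ₁ μ₂ ψ) (hd : ∀ᵐ x ∂μ₁, DifferentiableAt ℝ (cTransform ψ) x)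
    (hη : Continuous η) (hηper : PeriodicMod L η) :
    ∫ x, η (transportMap ψ x) ∂μ₁ = ∫ y, η y ∂μ₂ := by
  refine le_antisymm ?_ (hψ.integral_le_integral_transportMap hL hd hη hηper)
  have := hψ.integral_le_integral_transportMap hL hd hη.neg
    fun l hl x => congrArg Neg.neg (hηper l hl x)
  simpa only [Pi.neg_apply, integral_neg, neg_le_neg_iff] using this

theorem IsDualMaximizer.integral_norm_sub_transportMap_sq (hL : CoveringRadiusLE L R)
    (hψ : IsDualMaximizer L μ₁ μ₂ ψ) (hd : ∀ᵐ x ∂μ₁, DifferentiableAt ℝ (cTransform ψ) x) :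
    ∫ x, ‖x - transportMap ψ x‖ ^ 2 ∂μ₁ = 2 * dualFunctional μ₁ μ₂ ψ := by
  have hcost : ∀ᵐ x ∂μ₁, ‖x - transportMap ψ x‖ ^ 2 =
      2 * (cTransform ψ x + ψ (transportMap ψ x)) := by
    filter_upwards [hd] with x hx
    have : ‖x - transportMap ψ x‖ ^ 2 / 2 - ψ (transportMap ψ x) = cTransform ψ x :=
      transportMap_mem_contactSet hL hψ.continuous hψ.periodicMod hx
    linarith
  rw [integral_congr_ae hcost, integral_const_mul,
    integral_add (integrable_cTransform hL hψ.continuous hψ.periodicMod)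
      (hL.integrable_comp hψ.continuous hψ.periodicMod (measurable_transportMap ψ)),
    hψ.integral_transportMap hL hd hψ.continuous hψ.periodicMod, dualFunctional]

end TransportMap

/-! ### Measures agreeing on the quotient -/

section QuotientMeasure

variable {E : Type*} [SeminormedAddCommGroup E] {L : AddSubgroup E}

theorem PeriodicMod.thickenedIndicator {F : Set E} (hF : PeriodicMod L (· ∈ F)) {δ : ℝ}
    (hδ : 0 < δ) : PeriodicMod L (thickenedIndicator hδ F) := by
  intro l hl x
  have himage : (· + l) '' F = F := by
    ext y
    rw [image_add_right, mem_preimage]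
    exact (hF (-l) (L.neg_mem hl) y).to_iff
  have hdist : Metric.infEDist (x + l) F = Metric.infEDist x F := by
    conv_lhs => rw [← himage]
    exact Metric.infEDist_image (isometry_add_right l)
  simp only [thickenedIndicator_apply, thickenedIndicatorAux, hdist]

variable [MeasurableSpace E] [BorelSpace E] {ν μ : Measure E} [IsFiniteMeasure ν]
  [IsFiniteMeasure μ]

/-- Thickened indicators of an invariant closed set are admissible test functions. -/
theorem measure_eq_of_forall_integral_periodic_eq
    (h : ∀ η : E → ℝ, Continuous η → PeriodicMod L η → ∫ x, η x ∂ν = ∫ x, η x ∂μ)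
    {F : Set E} (hF : IsClosed F) (hper : PeriodicMod L (· ∈ F)) : ν F = μ F := by
  obtain ⟨δ, -, hδ, hlim⟩ := exists_seq_strictAnti_tendsto (0 : ℝ)
  have heq (n : ℕ) : ∫⁻ x, thickenedIndicator (hδ n) F x ∂ν =
      ∫⁻ x, thickenedIndicator (hδ n) F x ∂μ := by
    rw [← ENNReal.toReal_eq_toReal_iff'
      (BoundedContinuousFunction.lintegral_lt_top_of_nnreal ν _).ne
      (BoundedContinuousFunction.lintegral_lt_top_of_nnreal μ _).ne,
      BoundedContinuousFunction.toReal_lintegral_coe_eq_integral,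
      BoundedContinuousFunction.toReal_lintegral_coe_eq_integral]
    exact h _ (by fun_prop) fun l hl x => congrArg _ (hper.thickenedIndicator (hδ n) l hl x)
  have hν := tendsto_lintegral_thickenedIndicator_of_isClosed ν hF hδ hlim
  simp only [heq] at hν
  exact tendsto_nhds_unique hν (tendsto_lintegral_thickenedIndicator_of_isClosed μ hF hδ hlim)

theorem measure_eq_of_forall_integral_periodic_eq_of_isOpen
    (h : ∀ η : E → ℝ, Continuous η → PeriodicMod L η → ∫ x, η x ∂ν = ∫ x, η x ∂μ)
    {O : Set E} (hO : IsOpen O) (hper : PeriodicMod L (· ∈ O)) : ν O = μ O := by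
  have huniv : ν univ = μ univ :=
    measure_eq_of_forall_integral_periodic_eq h isClosed_univ fun _ _ _ => rfl
  have hcompl : ν Oᶜ = μ Oᶜ := measure_eq_of_forall_integral_periodic_eq h hO.isClosed_compl
    fun l hl x => congrArg Not (hper l hl x)
  rw [← compl_compl O, measure_compl hO.measurableSet.compl (measure_ne_top _ _),
    measure_compl hO.measurableSet.compl (measure_ne_top _ _), huniv, hcompl]

open scoped Pointwise in
/-- For open `O` the comparison is made on the saturation `O + L`, whose part in the fundamental
domain `C` has measure at most that of `O`. -/
theorem le_smul_of_forall_integral_periodic_eq {m : Measure E} [m.IsAddLeftInvariant]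
    [m.OuterRegular] [Countable L] {C : Set E} (hC : IsAddFundamentalDomain L C m) {M : ℝ≥0}
    (hμ : μ ≤ M • m.restrict C)
    (h : ∀ η : E → ℝ, Continuous η → PeriodicMod L η → ∫ x, η x ∂ν = ∫ x, η x ∂μ) :
    ν ≤ M • m := by
  have hopen : ∀ O : Set E, IsOpen O → ν O ≤ (M • m) O := by
    intro O hO
    have hsat : IsOpen (⋃ l : L, l +ᵥ O) := isOpen_iUnion fun l => hO.vadd l
    have hper : PeriodicMod L (· ∈ ⋃ l : L, l +ᵥ O) := by
      intro l hl x
      simp only [mem_iUnion, mem_vadd_set_iff_neg_vadd_mem, eq_iff_iff]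
      refine (Equiv.addRight (-⟨l, hl⟩ : L)).exists_congr fun k => ?_
      simp [AddSubgroup.vadd_def, add_comm, add_left_comm, add_assoc]
    calc ν O ≤ ν (⋃ l : L, l +ᵥ O) :=
          measure_mono (subset_iUnion_of_subset 0 (zero_vadd L O).ge)
      _ = μ (⋃ l : L, l +ᵥ O) :=
          measure_eq_of_forall_integral_periodic_eq_of_isOpen h hsat hper
      _ ≤ M • m ((⋃ l : L, l +ᵥ O) ∩ C) := by
          simpa [Measure.restrict_apply hsat.measurableSet] using hμ (⋃ l : L, l +ᵥ O)
      _ ≤ M • m O := by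
          rw [hC.measure_eq_tsum O, iUnion_inter]
          gcongr
          exact measure_iUnion_le _
  refine Measure.le_iff'.2 fun S => ?_
  rw [S.measure_eq_iInf_isOpen (M • m)]
  exact le_iInf₂ fun O hSO => le_iInf fun hO => (measure_mono hSO).trans (hopen O hO)

end QuotientMeasure

/-! ### Positive operators with convex combination the identity -/

section PositiveDet

variable {E : Type*} [NormedAddCommGroup E] [InnerProductSpace ℝ E] [FiniteDimensional ℝ E]

/-- The eigenvalues satisfy `λ ≤ exp (λ - 1)`. -/
theorem abs_det_le_one_of_trace_le_finrank {A : E →ₗ[ℝ] E} (hA : A.IsPositive)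
    (htr : A.trace ℝ E ≤ Module.finrank ℝ E) : |LinearMap.det A| ≤ 1 := by
  set eig := hA.isSymmetric.eigenvalues rfl
  have hnonneg (i) : 0 ≤ eig i := hA.nonneg_eigenvalues rfl i
  have hdet : LinearMap.det A = ∏ i, eig i := hA.isSymmetric.det_eq_prod_eigenvalues rfl
  have hsum : A.trace ℝ E = ∑ i, eig i := hA.isSymmetric.trace_eq_sum_eigenvalues rfl
  rw [hdet, abs_of_nonneg (Finset.prod_nonneg fun i _ => hnonneg i)]
  calc ∏ i, eig i ≤ ∏ i, rexp (eig i - 1) :=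
        Finset.prod_le_prod (fun i _ => hnonneg i) fun i _ => by
          linarith [add_one_le_exp (eig i - 1)]
    _ = rexp (∑ i, (eig i - 1)) := (exp_sum _ _).symm
    _ ≤ 1 := by
        rw [exp_le_one_iff, Finset.sum_sub_distrib]
        simpa [← hsum] using htr

theorem abs_det_le_one_or_of_smul_add_smul_eq_id {A B : E →ₗ[ℝ] E} (hA : A.IsPositive)
    (hB : B.IsPositive) {a b : ℝ} (ha : 0 ≤ a) (hb : 0 ≤ b) (hab : a + b = 1)
    (h : a • A + b • B = LinearMap.id) : |LinearMap.det A| ≤ 1 ∨ |LinearMap.det B| ≤ 1 := by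
  by_contra! hdet
  have hA' := lt_of_not_ge fun htr => hdet.1.not_ge (abs_det_le_one_of_trace_le_finrank hA htr)
  have hB' := lt_of_not_ge fun htr => hdet.2.not_ge (abs_det_le_one_of_trace_le_finrank hB htr)
  have htrace := congrArg (LinearMap.trace ℝ E) h
  simp only [map_add, map_smul, smul_eq_mul, LinearMap.trace_id] at htrace
  have hlt := (convex_Ioi (Module.finrank ℝ E : ℝ)) hA' hB' ha hb hab
  simp only [smul_eq_mul, htrace, mem_Ioi, lt_irrefl] at hlt

end PositiveDet

/-! ### Derivatives of monotone gradient fields -/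

section GradientField

variable {E : Type*} [NormedAddCommGroup E] [InnerProductSpace ℝ E]

theorem isSymmetric_of_hasGradientAt_of_hasFDerivAt [CompleteSpace E] {f : E → ℝ} {G : E → E}
    {A : E →L[ℝ] E} {z : E} (hG : ∀ y, HasGradientAt f (G y) y) (hA : HasFDerivAt G A z) :
    (A : E →ₗ[ℝ] E).IsSymmetric := by
  have h := (innerSL ℝ (E := E)).hasFDerivAt.comp z hA
  intro v w
  have := second_derivative_symmetric (fun y => (hG y).hasFDerivAt) h v w
  exact this.trans (real_inner_comm _ _)

theorem inner_nonneg_of_monotone_of_hasFDerivAt {G : E → E} {A : E →L[ℝ] E} {z : E}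
    (hG : ∀ x y, 0 ≤ ⟪G x - G y, x - y⟫_ℝ) (hA : HasFDerivAt G A z) (v : E) :
    0 ≤ ⟪A v, v⟫_ℝ := by
  refine ge_of_tendsto ((hA.hasLineDerivAt v).tendsto_slope_zero_right.inner
    (tendsto_const_nhds (x := v))) ?_
  filter_upwards [self_mem_nhdsWithin] with t (ht : 0 < t)
  have h := hG (z + t • v) z
  rw [add_sub_cancel_left, inner_smul_right] at h
  rw [real_inner_smul_left]
  exact mul_nonneg (inv_nonneg.2 ht.le) (nonneg_of_mul_nonneg_right h ht)

end GradientField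

/-! ### Inverting the displacement interpolation -/

theorem add_half_mul_norm_sub_sq_le_of_forall_le {E : Type*} [NormedAddCommGroup E]
    [NormedSpace ℝ E] {f : E → ℝ} {m : ℝ} (hf : StrongConvexOn univ m f) {p : E}
    (hp : ∀ x, f p ≤ f x) (x : E) : f p + m / 2 * ‖x - p‖ ^ 2 ≤ f x := by
  have hlim : Tendsto (fun t : ℝ => f p + (1 - t) * (m / 2 * ‖x - p‖ ^ 2)) (𝓝[>] 0)
      (𝓝 (f p + (1 - 0) * (m / 2 * ‖x - p‖ ^ 2))) :=
    ((by fun_prop : Continuous fun t : ℝ => f p + (1 - t) * (m / 2 * ‖x - p‖ ^ 2)).tendsto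
      0).mono_left nhdsWithin_le_nhds
  rw [sub_zero, one_mul] at hlim
  refine le_of_tendsto hlim ?_
  filter_upwards [Ioo_mem_nhdsGT zero_lt_one] with t ⟨ht₀, ht₁⟩
  have h := hf.2 (mem_univ x) (mem_univ p) ht₀.le (sub_nonneg.2 ht₁.le) (add_sub_cancel _ _)
  have hmin := hp (t • x + (1 - t) • p)
  simp only [smul_eq_mul] at h
  exact le_of_mul_le_mul_left (by linarith) ht₀

theorem periodicMod_const_mul_cTransform {E : Type*} [SeminormedAddCommGroup E] {L : AddSubgroup E}
    {ψ : E → ℝ} (hper : PeriodicMod L ψ) (θ : ℝ) :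
    PeriodicMod L fun x => θ * cTransform ψ x :=
  fun l hl x => congrArg (θ * ·) (cTransform.periodicMod hper l hl x)

section BackwardMap

variable {E : Type*} [NormedAddCommGroup E] [InnerProductSpace ℝ E] {L : AddSubgroup E} {R θ : ℝ}
  {ψ χ : E → ℝ}

theorem strongConvexOn_half_norm_sub_sq_sub_mul_cTransform (hψ : BddAbove (range ψ)) (hθ : 0 ≤ θ)
    (z : E) : StrongConvexOn univ (1 - θ) fun x => ‖z - x‖ ^ 2 / 2 - θ * cTransform ψ x := by
  rw [strongConvexOn_iff_convex]
  have haffine : ConvexOn ℝ univ fun x => ‖z‖ ^ 2 / 2 - ⟪z, x⟫_ℝ :=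
    (convexOn_const (‖z‖ ^ 2 / 2) convex_univ).sub ((innerₗ E z).concaveOn convex_univ)
  refine (((cTransform.convexOn_half_norm_sq_sub hψ).smul hθ).add haffine).congr fun x _ => ?_
  simp only [Pi.add_apply, smul_eq_mul, norm_sub_sq_real]
  ring

/-- Both one-sided bounds on the increment come from inserting the contact point of one endpoint in
the infimum defining the value at the other. -/
theorem hasGradientAt_cTransform_of_continuousAt [CompleteSpace E] (hχ : BddAbove (range χ))
    {P : E → E} (hP : ∀ z, P z ∈ contactSet χ z) {z : E} (hcont : ContinuousAt P z) :
    HasGradientAt (cTransform χ) (z - P z) z := by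
  have hupper (x y : E) : cTransform χ y ≤
      cTransform χ x + ⟪x - P x, y - x⟫_ℝ + ‖y - x‖ ^ 2 / 2 := by
    have hx : ‖x - P x‖ ^ 2 / 2 - χ (P x) = cTransform χ x := hP x
    have hy := cTransform.le hχ y (P x)
    rw [← sub_add_sub_cancel' x (P x) y, norm_add_sq_real] at hy
    linarith
  rw [hasGradientAt_iff_isLittleO]
  have hsmall : (fun y => (‖y - z‖ + ‖P y - P z‖) * ‖y - z‖) =o[𝓝 z] fun y => y - z := by
    refine .of_norm_right (.congr_right ?_ fun y => one_mul _)
    refine Asymptotics.IsLittleO.mul_isBigO ((Asymptotics.isLittleO_one_iff ℝ).2 ?_)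
      (Asymptotics.isBigO_refl _ _)
    simpa using (tendsto_norm_sub_self z).add (tendsto_iff_norm_sub_tendsto_zero.1 hcont)
  refine Asymptotics.IsBigO.trans_isLittleO (.of_bound' (.of_forall fun y => ?_)) hsmall
  have h₁ := hupper z y
  have h₂ := hupper y z
  have h₃ := real_inner_le_norm (P y - P z) (y - z)
  have h₄ : ⟪y - P y, z - y⟫_ℝ =
      ⟪P y - P z, y - z⟫_ℝ - ⟪z - P z, y - z⟫_ℝ - ‖y - z‖ ^ 2 := by
    rw [← real_inner_self_eq_norm_sq, ← inner_sub_left, ← inner_sub_left, ← neg_sub y z,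
      inner_neg_right, ← inner_neg_left]
    congr 1
    abel
  rw [norm_sub_rev z y] at h₂
  rw [Real.norm_of_nonneg (by positivity : 0 ≤ (‖y - z‖ + ‖P y - P z‖) * ‖y - z‖),
    Real.norm_eq_abs, abs_le]
  constructor <;> nlinarith [norm_nonneg (y - z), norm_nonneg (P y - P z)]

theorem transportMap_add [CompleteSpace E] (hper : PeriodicMod L ψ) {l : E} (hl : l ∈ L) (z : E) :
    transportMap ψ (z + l) = transportMap ψ z + l := by
  have hgrad : gradient (cTransform ψ) (z + l) = gradient (cTransform ψ) z := by
    rw [gradient, gradient, ← fderiv_comp_add_right]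
    exact congrArg (fun f => (toDual ℝ E).symm (fderiv ℝ f z))
      (funext (cTransform.periodicMod hper l hl))
  rw [transportMap, hgrad, transportMap]
  abel

theorem mem_contactSet_const_mul_cTransform (hψ : BddAbove (range ψ)) (hθ₀ : 0 ≤ θ)
    (hθ₁ : θ ≤ 1) {x y : E} (hy : y ∈ contactSet ψ x) :
    x ∈ contactSet (fun x => θ * cTransform ψ x) ((1 - θ) • x + θ • y) := by
  refine mem_contactSet_of_forall_le fun w => ?_
  have hcomb (w : E) : ‖(1 - θ) • x + θ • y - w‖ ^ 2 =
      (1 - θ) * ‖x - w‖ ^ 2 + θ * ‖w - y‖ ^ 2 - (1 - θ) * θ * ‖x - y‖ ^ 2 := by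
    have hw : (1 - θ) • x + θ • y - w = (x - w) - θ • (x - y) := by module
    have hy : w - y = (x - y) - (x - w) := by abel
    rw [hw, hy, norm_sub_sq_real (x - w), norm_sub_sq_real (x - y) (x - w), norm_smul, mul_pow,
      Real.norm_eq_abs, sq_abs, real_inner_smul_right, real_inner_comm (x - y)]
    ring
  have hx : ‖x - y‖ ^ 2 / 2 - ψ y = cTransform ψ x := hy
  have hw := mul_le_mul_of_nonneg_left (cTransform.le hψ w y) hθ₀
  have hsq := mul_nonneg (sub_nonneg.2 hθ₁) (sq_nonneg ‖x - w‖)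
  rw [hcomb, hcomb, ← hx, sub_self, norm_zero]
  linarith

variable [FiniteDimensional ℝ E]

theorem continuous_const_mul_cTransform (hL : CoveringRadiusLE L R) (hψ : Continuous ψ)
    (hper : PeriodicMod L ψ) (θ : ℝ) : Continuous fun x => θ * cTransform ψ x :=
  continuous_const.mul (cTransform.continuous hL (hL.bddAbove_range hψ hper) hper)

theorem cTransform_add_le_of_mem_contactSet (hL : CoveringRadiusLE L R) (hψ : Continuous ψ)
    (hper : PeriodicMod L ψ) (hθ : 0 ≤ θ) {z p : E}
    (hp : p ∈ contactSet (fun x => θ * cTransform ψ x) z) (x : E) :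
    cTransform (fun x => θ * cTransform ψ x) z + (1 - θ) / 2 * ‖x - p‖ ^ 2 ≤
      ‖z - x‖ ^ 2 / 2 - θ * cTransform ψ x := by
  have hbdd := hL.bddAbove_range (continuous_const_mul_cTransform hL hψ hper θ)
    (periodicMod_const_mul_cTransform hper θ)
  have hp' : ‖z - p‖ ^ 2 / 2 - θ * cTransform ψ p = cTransform (fun x => θ * cTransform ψ x) z := hp
  rw [← hp']
  exact add_half_mul_norm_sub_sq_le_of_forall_le
    (strongConvexOn_half_norm_sub_sq_sub_mul_cTransform (hL.bddAbove_range hψ hper) hθ z)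
    (fun y => hp'.le.trans (cTransform.le hbdd z y)) x

theorem mul_norm_sub_sq_le_inner_of_mem_contactSet (hL : CoveringRadiusLE L R) (hψ : Continuous ψ)
    (hper : PeriodicMod L ψ) (hθ : 0 ≤ θ) {z z' p p' : E}
    (hp : p ∈ contactSet (fun x => θ * cTransform ψ x) z)
    (hp' : p' ∈ contactSet (fun x => θ * cTransform ψ x) z') :
    (1 - θ) * ‖p - p'‖ ^ 2 ≤ ⟪p - p', z - z'⟫_ℝ := by
  have h₁ := cTransform_add_le_of_mem_contactSet hL hψ hper hθ hp p'
  have h₂ := cTransform_add_le_of_mem_contactSet hL hψ hper hθ hp' p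
  rw [← hp, norm_sub_rev p'] at h₁
  rw [← hp'] at h₂
  have hpolar : ‖z - p'‖ ^ 2 + ‖z' - p‖ ^ 2 - ‖z - p‖ ^ 2 - ‖z' - p'‖ ^ 2 =
      2 * ⟪p - p', z - z'⟫_ℝ := by
    simp only [norm_sub_sq_real, inner_sub_left, inner_sub_right, real_inner_comm z p,
      real_inner_comm z p', real_inner_comm z' p, real_inner_comm z' p']
    ring
  dsimp only at h₁ h₂
  linarith

theorem norm_sub_le_of_mem_contactSet (hL : CoveringRadiusLE L R) (hψ : Continuous ψ)
    (hper : PeriodicMod L ψ) (hθ₀ : 0 ≤ θ) (hθ₁ : θ < 1) {z z' p p' : E}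
    (hp : p ∈ contactSet (fun x => θ * cTransform ψ x) z)
    (hp' : p' ∈ contactSet (fun x => θ * cTransform ψ x) z') :
    ‖p - p'‖ ≤ (1 - θ)⁻¹ * ‖z - z'‖ := by
  have h := (mul_norm_sub_sq_le_inner_of_mem_contactSet hL hψ hper hθ₀ hp hp').trans
    (real_inner_le_norm _ _)
  rw [le_inv_mul_iff₀ (sub_pos.2 hθ₁)]
  obtain h₀ | h₀ := (norm_nonneg (p - p')).eq_or_lt
  · simp [← h₀]
  · exact le_of_mul_le_mul_left (by linarith) h₀

/-- The left inverse of the displacement interpolation `x ↦ (1 - θ) • x + θ • transportMap ψ x`: its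
value at `z` minimizes `x ↦ ‖z - x‖ ^ 2 / 2 - θ * cTransform ψ x`. -/
noncomputable def backwardMap (ψ : E → ℝ) (θ : ℝ) : E → E :=
  transportMap fun x => θ * cTransform ψ x

theorem differentiable_cTransform_const_mul_cTransform (hL : CoveringRadiusLE L R)
    (hψ : Continuous ψ) (hper : PeriodicMod L ψ) (hθ₀ : 0 ≤ θ) (hθ₁ : θ < 1) :
    Differentiable ℝ (cTransform fun x => θ * cTransform ψ x) := by
  have hcont := continuous_const_mul_cTransform hL hψ hper θ
  have hper' := periodicMod_const_mul_cTransform hper θ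
  choose P hP _ using cTransform.exists_mem_contactSet hL hcont hper'
  have hlip : LipschitzWith (1 - θ)⁻¹.toNNReal P := .of_dist_le' fun z z' => by
    rw [dist_eq_norm, dist_eq_norm]
    exact norm_sub_le_of_mem_contactSet hL hψ hper hθ₀ hθ₁ (hP z) (hP z')
  exact fun z => (hasGradientAt_cTransform_of_continuousAt (hL.bddAbove_range hcont hper') hP
    hlip.continuous.continuousAt).differentiableAt

theorem backwardMap_mem_contactSet (hL : CoveringRadiusLE L R) (hψ : Continuous ψ)
    (hper : PeriodicMod L ψ) (hθ₀ : 0 ≤ θ) (hθ₁ : θ < 1) (z : E) :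
    backwardMap ψ θ z ∈ contactSet (fun x => θ * cTransform ψ x) z :=
  transportMap_mem_contactSet hL (continuous_const_mul_cTransform hL hψ hper θ)
    (periodicMod_const_mul_cTransform hper θ)
    (differentiable_cTransform_const_mul_cTransform hL hψ hper hθ₀ hθ₁ z)

theorem norm_backwardMap_sub_le (hL : CoveringRadiusLE L R) (hψ : Continuous ψ)
    (hper : PeriodicMod L ψ) (hθ₀ : 0 ≤ θ) (hθ₁ : θ < 1) (z z' : E) :
    ‖backwardMap ψ θ z - backwardMap ψ θ z'‖ ≤ (1 - θ)⁻¹ * ‖z - z'‖ :=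
  norm_sub_le_of_mem_contactSet hL hψ hper hθ₀ hθ₁
    (backwardMap_mem_contactSet hL hψ hper hθ₀ hθ₁ z)
    (backwardMap_mem_contactSet hL hψ hper hθ₀ hθ₁ z')

theorem lipschitzWith_backwardMap (hL : CoveringRadiusLE L R) (hψ : Continuous ψ)
    (hper : PeriodicMod L ψ) (hθ₀ : 0 ≤ θ) (hθ₁ : θ < 1) :
    LipschitzWith (1 - θ)⁻¹.toNNReal (backwardMap ψ θ) :=
  .of_dist_le' fun z z' => by
    rw [dist_eq_norm, dist_eq_norm]
    exact norm_backwardMap_sub_le hL hψ hper hθ₀ hθ₁ z z'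

theorem backwardMap_smul_add_smul (hL : CoveringRadiusLE L R) (hψ : Continuous ψ)
    (hper : PeriodicMod L ψ) (hθ₀ : 0 ≤ θ) (hθ₁ : θ < 1) {x y : E} (hy : y ∈ contactSet ψ x) :
    backwardMap ψ θ ((1 - θ) • x + θ • y) = x :=
  (eq_transportMap_of_mem_contactSet
    (hL.bddAbove_range (continuous_const_mul_cTransform hL hψ hper θ)
      (periodicMod_const_mul_cTransform hper θ))
    (differentiable_cTransform_const_mul_cTransform hL hψ hper hθ₀ hθ₁ _)
    (mem_contactSet_const_mul_cTransform (hL.bddAbove_range hψ hper) hθ₀ hθ₁.le hy)).symm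

/-- The map sending `(1 - θ) • x + θ • transportMap ψ x` to `transportMap ψ x`; see
`smul_backwardMap_add_smul_forwardMap`. -/
noncomputable def forwardMap (ψ : E → ℝ) (θ : ℝ) (z : E) : E :=
  θ⁻¹ • (z - (1 - θ) • backwardMap ψ θ z)

theorem smul_backwardMap_add_smul_forwardMap (ψ : E → ℝ) (hθ : θ ≠ 0) (z : E) :
    (1 - θ) • backwardMap ψ θ z + θ • forwardMap ψ θ z = z := by
  rw [forwardMap, smul_inv_smul₀ hθ, add_sub_cancel]

theorem forwardMap_smul_add_smul (hL : CoveringRadiusLE L R) (hψ : Continuous ψ)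
    (hper : PeriodicMod L ψ) (hθ₀ : 0 < θ) (hθ₁ : θ < 1) {x y : E} (hy : y ∈ contactSet ψ x) :
    forwardMap ψ θ ((1 - θ) • x + θ • y) = y := by
  rw [forwardMap, backwardMap_smul_add_smul hL hψ hper hθ₀.le hθ₁ hy, add_sub_cancel_left,
    inv_smul_smul₀ hθ₀.ne']

theorem backwardMap_monotone (hL : CoveringRadiusLE L R) (hψ : Continuous ψ)
    (hper : PeriodicMod L ψ) (hθ₀ : 0 ≤ θ) (hθ₁ : θ < 1) (z z' : E) :
    0 ≤ ⟪backwardMap ψ θ z - backwardMap ψ θ z', z - z'⟫_ℝ :=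
  (mul_nonneg (sub_nonneg.2 hθ₁.le) (sq_nonneg _)).trans
    (mul_norm_sub_sq_le_inner_of_mem_contactSet hL hψ hper hθ₀
      (backwardMap_mem_contactSet hL hψ hper hθ₀ hθ₁ z)
      (backwardMap_mem_contactSet hL hψ hper hθ₀ hθ₁ z'))

theorem forwardMap_monotone (hL : CoveringRadiusLE L R) (hψ : Continuous ψ)
    (hper : PeriodicMod L ψ) (hθ₀ : 0 ≤ θ) (hθ₁ : θ < 1) (z z' : E) :
    0 ≤ ⟪forwardMap ψ θ z - forwardMap ψ θ z', z - z'⟫_ℝ := by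
  have hcs := (real_inner_le_norm _ _).trans (mul_le_mul_of_nonneg_right
    (norm_backwardMap_sub_le hL hψ hper hθ₀ hθ₁ z z') (norm_nonneg (z - z')))
  rw [mul_assoc, le_inv_mul_iff₀ (sub_pos.2 hθ₁)] at hcs
  have hdiff : forwardMap ψ θ z - forwardMap ψ θ z' =
      θ⁻¹ • (z - z' - (1 - θ) • (backwardMap ψ θ z - backwardMap ψ θ z')) := by
    simp only [forwardMap]
    module
  rw [hdiff, real_inner_smul_left, inner_sub_left, real_inner_smul_left, real_inner_self_eq_norm_sq]
  exact mul_nonneg (inv_nonneg.2 hθ₀) (by linarith)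

theorem lipschitzWith_forwardMap (hL : CoveringRadiusLE L R) (hψ : Continuous ψ)
    (hper : PeriodicMod L ψ) (hθ₀ : 0 ≤ θ) (hθ₁ : θ < 1) :
    ∃ K, LipschitzWith K (forwardMap ψ θ) :=
  ⟨_, (lipschitzWith_smul θ⁻¹).comp (LipschitzWith.id.sub
    ((lipschitzWith_smul (1 - θ)).comp (lipschitzWith_backwardMap hL hψ hper hθ₀ hθ₁)))⟩

theorem isSymmetric_of_hasFDerivAt_backwardMap (hL : CoveringRadiusLE L R) (hψ : Continuous ψ)
    (hper : PeriodicMod L ψ) (hθ₀ : 0 ≤ θ) (hθ₁ : θ < 1) {A : E →L[ℝ] E} {z : E}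
    (hA : HasFDerivAt (backwardMap ψ θ) A z) : (A : E →ₗ[ℝ] E).IsSymmetric := by
  have hgrad (y : E) : HasGradientAt (cTransform fun x => θ * cTransform ψ x)
      (y - backwardMap ψ θ y) y := by
    rw [backwardMap, transportMap, sub_sub_cancel]
    exact (differentiable_cTransform_const_mul_cTransform hL hψ hper hθ₀ hθ₁ y).hasGradientAt
  have h := isSymmetric_of_hasGradientAt_of_hasFDerivAt hgrad ((hasFDerivAt_id z).sub hA)
  simpa using LinearMap.IsSymmetric.id.sub h

/-- The two derivatives are positive and their convex combination with weights `1 - θ` and `θ` is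
the identity. -/
theorem abs_det_backwardMap_le_one_or_abs_det_forwardMap_le_one (hL : CoveringRadiusLE L R)
    (hψ : Continuous ψ) (hper : PeriodicMod L ψ) (hθ₀ : 0 < θ) (hθ₁ : θ < 1) {A B : E →L[ℝ] E}
    {z : E} (hA : HasFDerivAt (backwardMap ψ θ) A z) (hB : HasFDerivAt (forwardMap ψ θ) B z) :
    |A.det| ≤ 1 ∨ |B.det| ≤ 1 := by
  have hcomb : (1 - θ) • A + θ • B = .id ℝ E := by
    refine ((hA.const_smul (1 - θ)).add (hB.const_smul θ)).unique ?_
    exact (hasFDerivAt_id z).congr_of_eventuallyEq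
      (.of_forall (smul_backwardMap_add_smul_forwardMap ψ hθ₀.ne'))
  have hBA : B = θ⁻¹ • (.id ℝ E - (1 - θ) • A) := by
    rw [← hcomb, add_sub_cancel_left, inv_smul_smul₀ hθ₀.ne']
  have hAsymm := isSymmetric_of_hasFDerivAt_backwardMap hL hψ hper hθ₀.le hθ₁ hA
  have hBsymm : (B : E →ₗ[ℝ] E).IsSymmetric := by
    rw [hBA]
    exact (LinearMap.IsSymmetric.id.sub (hAsymm.smul (conj_trivial _))).smul (conj_trivial _)
  have hApos := inner_nonneg_of_monotone_of_hasFDerivAt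
    (backwardMap_monotone hL hψ hper hθ₀.le hθ₁) hA
  have hBpos := inner_nonneg_of_monotone_of_hasFDerivAt
    (forwardMap_monotone hL hψ hper hθ₀.le hθ₁) hB
  exact abs_det_le_one_or_of_smul_add_smul_eq_id ⟨hAsymm, hApos⟩ ⟨hBsymm, hBpos⟩
    (sub_nonneg.2 hθ₁.le) hθ₀.le (sub_add_cancel 1 θ)
    (congrArg ContinuousLinearMap.toLinearMap hcomb)

end BackwardMap

/-! ### Density bounds from Lipschitz images -/

section DensityBound

variable {E : Type*} [NormedAddCommGroup E] [NormedSpace ℝ E] [FiniteDimensional ℝ E]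
  [MeasurableSpace E] [BorelSpace E] {m ν : Measure E} [m.IsAddHaarMeasure] {M K K' : ℝ≥0}
  {P Q : E → E}

theorem measure_image_eq_zero_of_lipschitzWith (hP : LipschitzWith K P) {s : Set E}
    (hs : m s = 0) : m (P '' s) = 0 := by
  have hle := hP.hausdorffMeasure_image_le (d := Module.finrank ℝ E) (Nat.cast_nonneg _) s
  rw [Measure.absolutelyContinuous_isAddHaarMeasure (μH[Module.finrank ℝ E]) m hs, mul_zero] at hle
  exact Measure.absolutelyContinuous_isAddHaarMeasure m (μH[Module.finrank ℝ E])
    (nonpos_iff_eq_zero.1 hle)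

theorem absolutelyContinuous_of_map_lipschitzWith (hP : LipschitzWith K P) (h : ν.map P ≪ m) :
    ν ≪ m := fun s hs =>
  measure_mono_null (subset_preimage_image P s)
    (nonpos_iff_eq_zero.1 ((Measure.le_map_apply hP.continuous.aemeasurable _).trans
      (h (measure_image_eq_zero_of_lipschitzWith hP hs)).le))

theorem measure_le_of_abs_det_le_one (hP : AEMeasurable P ν) (h : ν.map P ≤ M • m)
    {P' : E → E →L[ℝ] E} {s : Set E} (hs : MeasurableSet s)
    (hP' : ∀ z ∈ s, HasFDerivAt P (P' z) z) (hdet : ∀ z ∈ s, |(P' z).det| ≤ 1) :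
    ν s ≤ M • m s :=
  calc ν s ≤ ν.map P (P '' s) :=
        (measure_mono (subset_preimage_image P s)).trans (Measure.le_map_apply hP _)
    _ ≤ M • m (P '' s) := h _
    _ ≤ M • ∫⁻ z in s, ENNReal.ofReal |(P' z).det| ∂m := by
        gcongr
        exact addHaar_image_le_lintegral_abs_det_fderiv m hs fun z hz =>
          (hP' z hz).hasFDerivWithinAt
    _ ≤ M • ∫⁻ _ in s, 1 ∂m := by
        gcongr M • ?_
        exact setLIntegral_mono measurable_const fun z hz => ENNReal.ofReal_le_one.2 (hdet z hz)
    _ = M • m s := by rw [setLIntegral_one]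

/-- Where `|det P'| ≤ 1` the bound for `ν.map P` is used, elsewhere that for `ν.map Q`. -/
theorem le_smul_of_map_lipschitzWith (hP : LipschitzWith K P) (hQ : LipschitzWith K' Q)
    (hνP : ν.map P ≤ M • m) (hνQ : ν.map Q ≤ M • m)
    (hdet : ∀ (z : E) (A B : E →L[ℝ] E), HasFDerivAt P A z → HasFDerivAt Q B z →
      |A.det| ≤ 1 ∨ |B.det| ≤ 1) : ν ≤ M • m := by
  have hac : ν ≪ m := absolutelyContinuous_of_map_lipschitzWith hP
    (Measure.absolutelyContinuous_of_le_smul hνP)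
  set D := {z | DifferentiableAt ℝ P z} ∩ {z | DifferentiableAt ℝ Q z}
  have hD : MeasurableSet D :=
    (measurableSet_of_differentiableAt ℝ P).inter (measurableSet_of_differentiableAt ℝ Q)
  have hDν : ∀ᵐ z ∂ν, z ∈ D :=
    hac.ae_le (hP.ae_differentiableAt.and hQ.ae_differentiableAt)
  set A := {z | |(fderiv ℝ P z).det| ≤ 1}
  have hA : MeasurableSet A := measurableSet_le
    (ContinuousLinearMap.continuous_det.measurable.comp (measurable_fderiv ℝ P)).abs
    measurable_const
  refine Measure.le_iff.2 fun s hs => ?_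
  calc ν s = ν (s ∩ D) := (measure_inter_conull hDν).symm
    _ = ν (s ∩ D ∩ A) + ν ((s ∩ D) \ A) := (measure_inter_add_sdiff _ hA).symm
    _ ≤ M • m (s ∩ D ∩ A) + M • m ((s ∩ D) \ A) :=
        add_le_add
          (measure_le_of_abs_det_le_one hP.continuous.aemeasurable hνP ((hs.inter hD).inter hA)
            (fun z hz => hz.1.2.1.hasFDerivAt) fun z hz => hz.2)
          (measure_le_of_abs_det_le_one hQ.continuous.aemeasurable hνQ ((hs.inter hD).diff hA)
            (fun z hz => hz.1.2.2.hasFDerivAt) fun z hz =>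
              (hdet z _ _ hz.1.2.1.hasFDerivAt hz.1.2.2.hasFDerivAt).resolve_left hz.2)
    _ = M • m (s ∩ D) := by rw [← smul_add, measure_inter_add_sdiff _ hA]
    _ ≤ (M • m) s := by
        rw [Measure.smul_apply]
        gcongr
        exact inter_subset_left

end DensityBound

/-! ### Displacement interpolation -/

theorem isAddFundamentalDomain_preimage {G X : Type*} [AddGroup G] [AddAction G X]
    [MeasurableSpace X] {m : Measure X} {C : Set X} {P : X → X} (hP : Measurable P)
    (hadd : ∀ (g : G) x, P (g +ᵥ x) = g +ᵥ P x) (hC : MeasurableSet C)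
    (hCu : ∀ x, ∃! g : G, g +ᵥ x ∈ C) : IsAddFundamentalDomain G (P ⁻¹' C) m :=
  .mk' (hP hC).nullMeasurableSet fun x => by simpa only [mem_preimage, hadd] using hCu (P x)

section Interpolation

variable {E : Type*} [NormedAddCommGroup E] [InnerProductSpace ℝ E] [FiniteDimensional ℝ E]
  {L : AddSubgroup E} {R θ : ℝ} {ψ v : E → ℝ}

theorem norm_transportMap_sub_le (hL : CoveringRadiusLE L R) (hψ : Continuous ψ)
    (hper : PeriodicMod L ψ) (x : E) : ‖transportMap ψ x - x‖ ≤ 2 * R := by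
  rw [transportMap, sub_sub_cancel_left, norm_neg, gradient, LinearIsometryEquiv.norm_map]
  exact (norm_fderiv_le_of_lipschitz ℝ
    (cTransform.lipschitzWith hL (hL.bddAbove_range hψ hper) hper)).trans
    (Real.coe_toNNReal _ (mul_nonneg zero_le_two hL.nonneg)).le

theorem backwardMap_add (hper : PeriodicMod L ψ) {l : E} (hl : l ∈ L) (z : E) :
    backwardMap ψ θ (z + l) = backwardMap ψ θ z + l :=
  transportMap_add (periodicMod_const_mul_cTransform hper θ) hl z

/-- The displacement interpolation at time `θ` between the identity and `transportMap ψ`. -/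
noncomputable def interpolationMap (ψ : E → ℝ) (θ : ℝ) (x : E) : E :=
  (1 - θ) • x + θ • transportMap ψ x

variable [MeasurableSpace E] [BorelSpace E]

@[fun_prop]
theorem measurable_interpolationMap (ψ : E → ℝ) (θ : ℝ) : Measurable (interpolationMap ψ θ) :=
  (measurable_id.const_smul _).add ((measurable_transportMap ψ).const_smul _)

variable {m μ₁ μ₂ : Measure E} [m.IsAddHaarMeasure]

theorem ae_differentiableAt_cTransform (hL : CoveringRadiusLE L R) (hψ : Continuous ψ)
    (hper : PeriodicMod L ψ) (hμ : μ₁ ≪ m) : ∀ᵐ x ∂μ₁, DifferentiableAt ℝ (cTransform ψ) x :=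
  hμ.ae_le (cTransform.lipschitzWith hL (hL.bddAbove_range hψ hper) hper).ae_differentiableAt

theorem ae_transportMap_mem_contactSet (hL : CoveringRadiusLE L R) (hψ : Continuous ψ)
    (hper : PeriodicMod L ψ) (hμ : μ₁ ≪ m) : ∀ᵐ x ∂μ₁, transportMap ψ x ∈ contactSet ψ x :=
  (ae_differentiableAt_cTransform hL hψ hper hμ).mono fun _ hx =>
    transportMap_mem_contactSet hL hψ hper hx

variable [IsProbabilityMeasure μ₁] [IsProbabilityMeasure μ₂] {C : Set E} {M : ℝ≥0}

namespace IsDualMaximizer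

theorem map_interpolationMap_le_smul [Countable L] (hL : CoveringRadiusLE L R)
    (hψ : IsDualMaximizer L μ₁ μ₂ ψ) (hC : IsAddFundamentalDomain L C m) (hμ₁ : μ₁ ≤ M • m)
    (hμ₂ : μ₂ ≤ M • m.restrict C) (hθ₀ : 0 < θ) (hθ₁ : θ < 1) :
    μ₁.map (interpolationMap ψ θ) ≤ M • m := by
  have hac : μ₁ ≪ m := Measure.absolutelyContinuous_of_le_smul hμ₁
  have hT := ae_transportMap_mem_contactSet hL hψ.continuous hψ.periodicMod hac
  have hP := lipschitzWith_backwardMap hL hψ.continuous hψ.periodicMod hθ₀.le hθ₁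
  obtain ⟨K, hQ⟩ := lipschitzWith_forwardMap hL hψ.continuous hψ.periodicMod hθ₀.le hθ₁
  have hX := measurable_interpolationMap ψ θ
  refine le_smul_of_map_lipschitzWith hP hQ ?_ ?_ fun z A B hA hB =>
    abs_det_backwardMap_le_one_or_abs_det_forwardMap_le_one hL hψ.continuous hψ.periodicMod
      hθ₀ hθ₁ hA hB
  · rw [Measure.map_map hP.continuous.measurable hX, Measure.map_congr (g := id), Measure.map_id]
    · exact hμ₁
    · exact hT.mono fun x hx =>
        backwardMap_smul_add_smul hL hψ.continuous hψ.periodicMod hθ₀.le hθ₁ hx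
  · rw [Measure.map_map hQ.continuous.measurable hX, Measure.map_congr (g := transportMap ψ)]
    · have : IsFiniteMeasure (μ₁.map (transportMap ψ)) := Measure.isFiniteMeasure_map _ _
      refine le_smul_of_forall_integral_periodic_eq hC hμ₂ fun η hη hηper => ?_
      rw [integral_map (measurable_transportMap ψ).aemeasurable hη.aestronglyMeasurable,
        hψ.integral_transportMap hL
          (ae_differentiableAt_cTransform hL hψ.continuous hψ.periodicMod hac) hη hηper]
    · exact hT.mono fun x hx =>
        forwardMap_smul_add_smul hL hψ.continuous hψ.periodicMod hθ₀ hθ₁ hx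

theorem map_interpolationMap_le_smul_restrict [Countable L] (hL : CoveringRadiusLE L R)
    (hψ : IsDualMaximizer L μ₁ μ₂ ψ) (hC : MeasurableSet C) (hCu : ∀ x, ∃! l : L, l +ᵥ x ∈ C)
    (hμ₁ : μ₁ ≤ M • m.restrict C) (hμ₂ : μ₂ ≤ M • m.restrict C) (hθ₀ : 0 < θ) (hθ₁ : θ < 1) :
    μ₁.map (interpolationMap ψ θ) ≤ M • m.restrict (backwardMap ψ θ ⁻¹' C) := by
  have hle : M • m.restrict C ≤ M • m := by
    gcongr
    exact Measure.restrict_le_self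
  have hmem : ∀ᵐ z ∂μ₁.map (interpolationMap ψ θ), z ∈ backwardMap ψ θ ⁻¹' C := by
    have hP := lipschitzWith_backwardMap hL hψ.continuous hψ.periodicMod hθ₀.le hθ₁
    refine (ae_map_iff (measurable_interpolationMap ψ θ).aemeasurable
      (hP.continuous.measurable hC)).2 ?_
    have hμC : ∀ᵐ x ∂μ₁, x ∈ C :=
      (Measure.absolutelyContinuous_of_le_smul hμ₁).ae_le (ae_restrict_mem hC)
    filter_upwards [hμC, ae_transportMap_mem_contactSet hL hψ.continuous hψ.periodicMod
      (Measure.absolutelyContinuous_of_le_smul (hμ₁.trans hle))] with x hxC hx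
    rwa [interpolationMap,
      backwardMap_smul_add_smul hL hψ.continuous hψ.periodicMod hθ₀.le hθ₁ hx]
  rw [← Measure.restrict_eq_self_of_ae_mem hmem, ← Measure.restrict_smul]
  exact Measure.restrict_mono_measure (hψ.map_interpolationMap_le_smul hL
    (.mk' hC.nullMeasurableSet hCu) (hμ₁.trans hle) hμ₂ hθ₀ hθ₁) _

theorem integral_comp_interpolationMap_le [Countable L] (hL : CoveringRadiusLE L R)
    (hψ : IsDualMaximizer L μ₁ μ₂ ψ) (hC : MeasurableSet C) (hCu : ∀ x, ∃! l : L, l +ᵥ x ∈ C)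
    (hCm : m C ≠ ∞) (hμ₁ : μ₁ ≤ M • m.restrict C) (hμ₂ : μ₂ ≤ M • m.restrict C) (hθ₀ : 0 < θ)
    (hθ₁ : θ < 1) (hv : Continuous v) (hvper : PeriodicMod L v) (hv₀ : 0 ≤ v) :
    ∫ x, v (interpolationMap ψ θ x) ∂μ₁ ≤ M * ∫ x in C, v x ∂m := by
  have hP := lipschitzWith_backwardMap hL hψ.continuous hψ.periodicMod hθ₀.le hθ₁
  have hfd : IsAddFundamentalDomain L C m := .mk' hC.nullMeasurableSet hCu
  have hfd' : IsAddFundamentalDomain L (backwardMap ψ θ ⁻¹' C) m :=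
    isAddFundamentalDomain_preimage hP.continuous.measurable (fun l x => by
      simp only [AddSubgroup.vadd_def, vadd_eq_add]
      rw [add_comm, backwardMap_add hψ.periodicMod l.2, add_comm]) hC hCu
  have : IsFiniteMeasure (m.restrict (backwardMap ψ θ ⁻¹' C)) :=
    isFiniteMeasure_restrict.2 (hfd'.measure_eq hfd ▸ hCm)
  calc ∫ x, v (interpolationMap ψ θ x) ∂μ₁
      = ∫ z, v z ∂μ₁.map (interpolationMap ψ θ) :=
        (integral_map (by fun_prop) hv.aestronglyMeasurable).symm
    _ ≤ ∫ z, v z ∂(M • m.restrict (backwardMap ψ θ ⁻¹' C)) :=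
        integral_mono_measure
          (hψ.map_interpolationMap_le_smul_restrict hL hC hCu hμ₁ hμ₂ hθ₀ hθ₁) (ae_of_all _ hv₀)
          ((hL.integrable hv hvper).smul_measure_nnreal)
    _ = M * ∫ z in backwardMap ψ θ ⁻¹' C, v z ∂m := integral_smul_nnreal_measure _ _
    _ = M * ∫ z in C, v z ∂m := by
        rw [hfd'.setIntegral_eq hfd fun l x => by
          rw [AddSubgroup.vadd_def, vadd_eq_add, add_comm, hvper l l.2]]

end IsDualMaximizer

end Interpolation

/-! ### The energy estimate -/

section Energy

theorem sq_integral_inner_le {Ω F : Type*} [MeasurableSpace Ω] [NormedAddCommGroup F]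
    [InnerProductSpace ℝ F] {μ : Measure Ω} {f g : Ω → F} (hf : MemLp f 2 μ) (hg : MemLp g 2 μ) :
    (∫ x, inner ℝ (f x) (g x) ∂μ) ^ 2 ≤ (∫ x, ‖f x‖ ^ 2 ∂μ) * ∫ x, ‖g x‖ ^ 2 ∂μ := by
  have hinner : ∀ {f g : Ω → F} (hf : MemLp f 2 μ) (hg : MemLp g 2 μ),
      ∫ x, inner ℝ (f x) (g x) ∂μ = inner ℝ (hf.toLp f) (hg.toLp g) := fun hf hg => by
    rw [L2.inner_def]
    refine integral_congr_ae ?_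
    filter_upwards [hf.coeFn_toLp, hg.coeFn_toLp] with x hfx hgx
    rw [hfx, hgx]
  simp only [← real_inner_self_eq_norm_sq]
  rw [hinner hf hg, hinner hf hf, hinner hg hg, sq]
  exact real_inner_mul_inner_self_le _ _

variable {E : Type*} [NormedAddCommGroup E] [InnerProductSpace ℝ E] [FiniteDimensional ℝ E]
  {L : AddSubgroup E} {R θ : ℝ} {ψ u : E → ℝ} {G : E → E}

theorem hasDerivAt_interpolationMap (ψ : E → ℝ) (θ : ℝ) (x : E) :
    HasDerivAt (fun θ => interpolationMap ψ θ x) (transportMap ψ x - x) θ := by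
  have h := (((hasDerivAt_id θ).const_sub 1).smul_const x).add
    ((hasDerivAt_id θ).smul_const (transportMap ψ x))
  rwa [neg_one_smul, one_smul, neg_add_eq_sub] at h

variable [MeasurableSpace E] [BorelSpace E] {m μ₁ μ₂ : Measure E} [m.IsAddHaarMeasure]

theorem memLp_transportMap_sub [IsFiniteMeasure μ₁] (hL : CoveringRadiusLE L R)
    (hψ : Continuous ψ) (hper : PeriodicMod L ψ) (p : ℝ≥0∞) :
    MemLp (fun x => transportMap ψ x - x) p μ₁ :=
  .of_bound ((measurable_transportMap ψ).sub measurable_id).aestronglyMeasurable (2 * R)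
    (ae_of_all _ fun x => norm_transportMap_sub_le hL hψ hper x)

theorem memLp_comp_interpolationMap [IsFiniteMeasure μ₁] (hL : CoveringRadiusLE L R)
    (hG : Continuous G) (hGper : PeriodicMod L G) (p : ℝ≥0∞) :
    MemLp (fun x => G (interpolationMap ψ θ x)) p μ₁ :=
  have ⟨B, hB⟩ := hL.exists_norm_le hG hGper
  .of_bound (hG.measurable.comp (measurable_interpolationMap ψ θ)).aestronglyMeasurable B
    (ae_of_all _ fun _ => hB _)

theorem hasDerivAt_integral_comp_interpolationMap [IsFiniteMeasure μ₁]
    (hL : CoveringRadiusLE L R) (hψ : Continuous ψ) (hper : PeriodicMod L ψ)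
    (hu : ∀ x, HasGradientAt u (G x) x) (hG : Continuous G) (huper : PeriodicMod L u)
    (hGper : PeriodicMod L G) (θ : ℝ) :
    HasDerivAt (fun θ => ∫ x, u (interpolationMap ψ θ x) ∂μ₁)
      (∫ x, inner ℝ (G (interpolationMap ψ θ x)) (transportMap ψ x - x) ∂μ₁) θ := by
  have huc : Continuous u := continuous_iff_continuousAt.2 fun x => (hu x).continuousAt
  obtain ⟨B, hB⟩ := hL.exists_norm_le hG hGper
  have hX := measurable_interpolationMap ψ
  refine (hasDerivAt_integral_of_dominated_loc_of_deriv_le univ_mem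
    (F := fun θ x => u (interpolationMap ψ θ x))
    (F' := fun θ x => inner ℝ (G (interpolationMap ψ θ x)) (transportMap ψ x - x))
    (Eventually.of_forall fun θ => (huc.measurable.comp (hX θ)).aestronglyMeasurable)
    (hL.integrable_comp huc huper (hX θ))
    ((hG.measurable.comp (hX θ)).inner
      ((measurable_transportMap ψ).sub measurable_id)).aestronglyMeasurable
    (ae_of_all _ fun x θ _ => (norm_inner_le_norm _ _).trans (mul_le_mul (hB _)
      (norm_transportMap_sub_le hL hψ hper x) (norm_nonneg _) ((norm_nonneg _).trans (hB 0))))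
    (integrable_const _) (ae_of_all _ fun x θ _ => ?_)).2
  rw [← toDual_apply_apply]
  exact (hu _).hasFDerivAt.comp_hasDerivAt θ (hasDerivAt_interpolationMap ψ θ x)

theorem IsDualMaximizer.sq_sub_integral_le [Countable L] [IsProbabilityMeasure μ₁]
    [IsProbabilityMeasure μ₂] {C : Set E} {M : ℝ≥0} (hL : CoveringRadiusLE L R)
    (hψ : IsDualMaximizer L μ₁ μ₂ ψ) (hC : MeasurableSet C) (hCu : ∀ x, ∃! l : L, l +ᵥ x ∈ C)
    (hCm : m C ≠ ∞) (hμ₁ : μ₁ ≤ M • m.restrict C) (hμ₂ : μ₂ ≤ M • m.restrict C)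
    (hu : ∀ x, HasGradientAt u (G x) x) (hG : Continuous G) (huper : PeriodicMod L u)
    (hGper : PeriodicMod L G) :
    (∫ y, u y ∂μ₂ - ∫ x, u x ∂μ₁) ^ 2 ≤
      M * (∫ x in C, ‖G x‖ ^ 2 ∂m) * (2 * dualFunctional μ₁ μ₂ ψ) := by
  have hd := ae_differentiableAt_cTransform hL hψ.continuous hψ.periodicMod
    ((Measure.absolutelyContinuous_of_le_smul hμ₁).trans
      (Measure.absolutelyContinuous_of_le Measure.restrict_le_self))
  have hderiv := hasDerivAt_integral_comp_interpolationMap (μ₁ := μ₁) hL hψ.continuous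
    hψ.periodicMod hu hG huper hGper
  obtain ⟨θ, ⟨hθ₀, hθ₁⟩, hslope⟩ := exists_hasDerivAt_eq_slope _ _ zero_lt_one
    (fun θ _ => (hderiv θ).continuousAt.continuousWithinAt) fun θ _ => hderiv θ
  have huc : Continuous u := continuous_iff_continuousAt.2 fun x => (hu x).continuousAt
  simp only [interpolationMap, sub_self, sub_zero, zero_smul, one_smul, zero_add, add_zero, div_one,
    hψ.integral_transportMap hL hd huc huper] at hslope
  have hcost : ∫ x, ‖transportMap ψ x - x‖ ^ 2 ∂μ₁ = 2 * dualFunctional μ₁ μ₂ ψ := by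
    simp only [← hψ.integral_norm_sub_transportMap_sq hL hd, norm_sub_rev]
  rw [← hslope, ← hcost]
  refine (sq_integral_inner_le (memLp_comp_interpolationMap hL hG hGper 2)
    (memLp_transportMap_sub hL hψ.continuous hψ.periodicMod 2)).trans ?_
  gcongr
  exact hψ.integral_comp_interpolationMap_le (v := fun x => ‖G x‖ ^ 2) hL hC hCu hCm hμ₁ hμ₂ hθ₀
    hθ₁ (by fun_prop) (fun l hl x => by simp only [hGper l hl x]) fun _ => sq_nonneg _

end Energy

/-! ### Smooth approximation of periodic functions -/

section SmoothApproximation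

open ContinuousLinearMap
open scoped Convolution ContDiff

variable {E F : Type*} [NormedAddCommGroup E] [NormedSpace ℝ E] [NormedAddCommGroup F]
  [NormedSpace ℝ F] {u : E → F}

theorem hasFDerivAt_convolution_of_norm_le [MeasurableSpace E] [BorelSpace E]
    [SecondCountableTopology E] {μ : Measure E} {f : E → ℝ} {B B' : ℝ} (hf : Integrable f μ)
    (hu : ContDiff ℝ 1 u) (hB : ∀ x, ‖u x‖ ≤ B) (hB' : ∀ x, ‖fderiv ℝ u x‖ ≤ B') (x : E) :
    HasFDerivAt (f ⋆[lsmul ℝ ℝ, μ] u) ((f ⋆[lsmul ℝ ℝ, μ] fderiv ℝ u) x) x := by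
  have hu' : Continuous (fderiv ℝ u) := hu.continuous_fderiv one_ne_zero
  have hint (x : E) : Integrable (fun t => f t • u (x - t)) μ :=
    hf.smul_bdd B (hu.continuous.comp (by fun_prop)).aestronglyMeasurable
      (ae_of_all _ fun t => hB _)
  refine hasFDerivAt_integral_of_dominated_of_fderiv_le univ_mem
    (F' := fun x t => f t • fderiv ℝ u (x - t)) (bound := fun t => ‖f t‖ * B')
    (Eventually.of_forall fun x => (hint x).aestronglyMeasurable) (hint x)
    (hf.aestronglyMeasurable.smul (hu'.comp (by fun_prop)).aestronglyMeasurable)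
    (ae_of_all _ fun t y _ => ?_) (hf.norm.mul_const _) (ae_of_all _ fun t y _ => ?_)
  · rw [norm_smul]
    exact mul_le_mul_of_nonneg_left (hB' _) (norm_nonneg _)
  · have hd : HasFDerivAt u (fderiv ℝ u (y - t)) (y - t) :=
      (hu.differentiable one_ne_zero _).hasFDerivAt
    exact (hd.comp y ((hasFDerivAt_id y).sub_const t)).const_smul (f t)

theorem PeriodicMod.fderiv {L : AddSubgroup E} (hper : PeriodicMod L u) :
    PeriodicMod L (fderiv ℝ u) := by
  intro l hl x
  rw [← fderiv_comp_add_right]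
  exact congrArg (fun v : E → F => _root_.fderiv ℝ v x) (funext (hper l hl))

theorem CoveringRadiusLE.exists_contDiff_norm_sub_le [FiniteDimensional ℝ E] [CompleteSpace F]
    {L : AddSubgroup E} {R δ : ℝ} (hL : CoveringRadiusLE L R) (hu : ContDiff ℝ 1 u)
    (hper : PeriodicMod L u) (hδ : 0 < δ) :
    ∃ w : E → F, ContDiff ℝ ∞ w ∧ PeriodicMod L w ∧
      ∀ x, ‖w x - u x‖ ≤ δ ∧ ‖fderiv ℝ w x - fderiv ℝ u x‖ ≤ δ := by
  borelize E
  have : ProperSpace E := FiniteDimensional.proper_real E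
  have hu' : Continuous (fderiv ℝ u) := hu.continuous_fderiv one_ne_zero
  obtain ⟨B, hB⟩ := hL.exists_norm_le hu.continuous hper
  obtain ⟨B', hB'⟩ := hL.exists_norm_le hu' hper.fderiv
  obtain ⟨r, hr, hclose⟩ := Metric.uniformContinuous_iff.1
    (hL.uniformContinuous hu.continuous hper) δ hδ
  obtain ⟨r', hr', hclose'⟩ := Metric.uniformContinuous_iff.1
    (hL.uniformContinuous hu' hper.fderiv) δ hδ
  let χ : ContDiffBump (0 : E) :=
    ⟨min r r' / 2, min r r', by positivity, half_lt_self (by positivity)⟩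
  refine ⟨χ.normed Measure.addHaar ⋆[lsmul ℝ ℝ, Measure.addHaar] u,
    χ.hasCompactSupport_normed.contDiff_convolution_left _ χ.contDiff_normed
      hu.continuous.locallyIntegrable,
    fun l hl x => by simp only [convolution_def, add_sub_right_comm, hper l hl _],
    fun x => ⟨?_, ?_⟩⟩
  · rw [← dist_eq_norm]
    exact χ.dist_normed_convolution_le hu.continuous.aestronglyMeasurable fun y hy =>
      (hclose (hy.trans_le (min_le_left _ _))).le
  · rw [(hasFDerivAt_convolution_of_norm_le χ.integrable_normed hu hB hB' x).fderiv, ← dist_eq_norm]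
    exact χ.dist_normed_convolution_le hu'.aestronglyMeasurable fun y hy =>
      (hclose' (hy.trans_le (min_le_right _ _))).le

end SmoothApproximation

/-! ### Lattices generated by a basis -/

theorem coveringRadiusLE_span_basis {E ι : Type*} [NormedAddCommGroup E] [NormedSpace ℝ E]
    [Fintype ι] (b : Module.Basis ι ℝ E) :
    CoveringRadiusLE (Submodule.span ℤ (range b)).toAddSubgroup (∑ i, ‖b i‖) := fun x =>
  ⟨-ZSpan.floor b x, neg_mem (ZSpan.floor b x).2, by
    simpa only [ZSpan.fract_apply, ← sub_eq_add_neg] using ZSpan.norm_fract_le b x⟩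

/-! ### The flat torus -/

section Torus

variable {d : ℕ}

/-- The lattice `ℤ^d` in `Fin d → ℝ`. -/
abbrev integerLattice (d : ℕ) : AddSubgroup (Fin d → ℝ) :=
  (Submodule.span ℤ (range (Pi.basisFun ℝ (Fin d)))).toAddSubgroup

/-- The lattice `ℤ^d` in `EuclideanSpace ℝ (Fin d)`, where optimal transport takes place. -/
abbrev euclideanIntegerLattice (d : ℕ) : AddSubgroup (EuclideanSpace ℝ (Fin d)) :=
  (Submodule.span ℤ (range (EuclideanSpace.basisFun (Fin d) ℝ).toBasis)).toAddSubgroup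

theorem mem_integerLattice {x : Fin d → ℝ} : x ∈ integerLattice d ↔ ∃ k, latVec k = x := by
  simp [Module.Basis.mem_span_iff_repr_mem, latVec, funext_iff, Classical.skolem]

theorem mem_euclideanIntegerLattice {x : EuclideanSpace ℝ (Fin d)} :
    x ∈ euclideanIntegerLattice d ↔ ∃ k, WithLp.toLp 2 (latVec k) = x := by
  rw [Submodule.mem_toAddSubgroup, Module.Basis.mem_span_iff_repr_mem]
  simp [latVec, PiLp.ext_iff, Classical.skolem]

theorem zPeriodic_iff_periodicMod {α : Type*} {f : (Fin d → ℝ) → α} :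
    ZPeriodic f ↔ PeriodicMod (integerLattice d) f := by
  simp only [PeriodicMod, mem_integerLattice, forall_exists_index, forall_apply_eq_imp_iff,
    Function.Periodic, ZPeriodic]
  exact forall_comm

theorem ZPeriodic.periodicMod_comp_ofLp {α : Type*} {f : (Fin d → ℝ) → α} (hf : ZPeriodic f) :
    PeriodicMod (euclideanIntegerLattice d) fun x => f (WithLp.ofLp x) := by
  intro l hl x
  obtain ⟨k, rfl⟩ := mem_euclideanIntegerLattice.1 hl
  exact hf x.ofLp k

instance isProbabilityMeasure_torusMeasure : IsProbabilityMeasure (torusMeasure d) :=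
  ⟨by simp [torusMeasure, Tcube, Real.volume_pi_Ico]⟩

theorem ZPeriodic.integrable {F : Type*} [NormedAddCommGroup F] {f : (Fin d → ℝ) → F}
    (hper : ZPeriodic f) (hf : Continuous f) : Integrable f (torusMeasure d) :=
  (coveringRadiusLE_span_basis _).integrable hf (zPeriodic_iff_periodicMod.1 hper)

theorem ZPeriodic.integrable_mul {f g : (Fin d → ℝ) → ℝ} (hper : ZPeriodic f) (hf : Continuous f)
    (hg : Integrable g (torusMeasure d)) : Integrable (fun x => g x * f x) (torusMeasure d) := by
  obtain ⟨B, hB⟩ := (coveringRadiusLE_span_basis _).exists_norm_le hf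
    (zPeriodic_iff_periodicMod.1 hper)
  exact hg.mul_bdd (c := B) hf.aestronglyMeasurable (ae_of_all _ hB)

/-! ### Gradients of periodic functions -/

theorem dotP_grad (v : Fin d → ℝ) (u : (Fin d → ℝ) → ℝ) (x : Fin d → ℝ) :
    dotP v (grad u x) = fderiv ℝ u x v := by
  conv_rhs => rw [pi_eq_sum_univ' v, map_sum]
  simp only [dotP, grad, map_smul, smul_eq_mul]

theorem dotP_self (v : Fin d → ℝ) : dotP v v = euclNorm v ^ 2 := by
  rw [euclNorm, Real.sq_sqrt (Finset.sum_nonneg fun i _ => sq_nonneg _)]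
  simp only [dotP, sq]

theorem norm_toLp_eq_euclNorm (v : Fin d → ℝ) :
    ‖(WithLp.toLp 2 v : EuclideanSpace ℝ (Fin d))‖ = euclNorm v := by
  simp [EuclideanSpace.norm_eq, euclNorm]

theorem continuous_grad {u : (Fin d → ℝ) → ℝ} (hu : ContDiff ℝ 1 u) : Continuous (grad u) :=
  continuous_pi fun _ => (hu.continuous_fderiv one_ne_zero).clm_apply continuous_const

theorem ZPeriodic.fderiv {u : (Fin d → ℝ) → ℝ} (hper : ZPeriodic u) : ZPeriodic (fderiv ℝ u) :=
  zPeriodic_iff_periodicMod.2 (zPeriodic_iff_periodicMod.1 hper).fderiv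

theorem ZPeriodic.grad {u : (Fin d → ℝ) → ℝ} (hper : ZPeriodic u) : ZPeriodic (grad u) :=
  fun x k => by unfold _root_.grad; rw [hper.fderiv x k]

theorem grad_sub {U V : (Fin d → ℝ) → ℝ} (hU : ContDiff ℝ 1 U) (hV : ContDiff ℝ 1 V)
    (x : Fin d → ℝ) : grad (fun y => U y - V y) x = grad U x - grad V x := by
  ext i
  simp only [grad, fderiv_fun_sub (hU.differentiable one_ne_zero x)
    (hV.differentiable one_ne_zero x), sub_apply, Pi.sub_apply]

theorem hasGradientAt_comp_ofLp {u : (Fin d → ℝ) → ℝ} {x : EuclideanSpace ℝ (Fin d)}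
    (hu : DifferentiableAt ℝ u x.ofLp) :
    HasGradientAt (fun y : EuclideanSpace ℝ (Fin d) => u y.ofLp)
      (WithLp.toLp 2 (grad u x.ofLp)) x := by
  rw [hasGradientAt_iff_hasFDerivAt]
  refine (hu.hasFDerivAt.comp x
    (PiLp.continuousLinearEquiv 2 ℝ fun _ : Fin d => ℝ).hasFDerivAt).congr_fderiv ?_
  ext v
  exact (dotP_grad v.ofLp u x.ofLp).symm

/-! ### The weak Poisson equation -/

theorem norm_integral_sub_integral_le {Ω F : Type*} [MeasurableSpace Ω] [NormedAddCommGroup F]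
    [NormedSpace ℝ F] {μ : Measure Ω} {f g : Ω → F} {b : Ω → ℝ} (hf : Integrable f μ)
    (hg : Integrable g μ) (hb : Integrable b μ) (hle : ∀ᵐ x ∂μ, ‖f x - g x‖ ≤ b x) :
    ‖∫ x, f x ∂μ - ∫ x, g x ∂μ‖ ≤ ∫ x, b x ∂μ := by
  rw [← integral_sub hf hg]
  exact norm_integral_le_of_norm_le hb hle

namespace IsWeakPoisson

variable {ε : ℝ} {U V g h u : (Fin d → ℝ) → ℝ}

theorem integrable_dotP_grad (hU : ContDiff ℝ 1 U) (hUper : ZPeriodic U) (hu : ContDiff ℝ 1 u)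
    (hper : ZPeriodic u) :
    Integrable (fun x => dotP (grad U x) (grad u x)) (torusMeasure d) := by
  have hGU := continuous_grad hU
  have hGu := continuous_grad hu
  refine ZPeriodic.integrable (fun x k => ?_) (by unfold dotP; fun_prop)
  simp only [hUper.grad x k, hper.grad x k]

theorem sub (hU : ContDiff ℝ 1 U) (hUper : ZPeriodic U) (hV : ContDiff ℝ 1 V)
    (hVper : ZPeriodic V) (hg : Integrable g (torusMeasure d)) (hh : Integrable h (torusMeasure d))
    (hwU : IsWeakPoisson ε U g) (hwV : IsWeakPoisson ε V h) :
    IsWeakPoisson ε (fun x => U x - V x) fun x => g x - h x := by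
  intro φ hφ hφper
  have hφ₁ : ContDiff ℝ 1 φ := hφ.of_le (by exact_mod_cast le_top)
  have hdot (x : Fin d → ℝ) : dotP (grad (fun x => U x - V x) x) (grad φ x) =
      dotP (grad U x) (grad φ x) - dotP (grad V x) (grad φ x) := by
    simp only [grad_sub hU hV, dotP_grad, map_sub]
  simp only [hdot, sub_mul]
  rw [integral_sub (integrable_dotP_grad hU hUper hφ₁ hφper)
      (integrable_dotP_grad hV hVper hφ₁ hφper), mul_sub, hwU φ hφ hφper, hwV φ hφ hφper,
    integral_sub (hφper.integrable_mul hφ.continuous hg) (hφper.integrable_mul hφ.continuous hh)]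
  ring

theorem of_contDiff_one (hU : ContDiff ℝ 1 U) (hUper : ZPeriodic U)
    (hg : Integrable g (torusMeasure d)) (hw : IsWeakPoisson ε U g) (hu : ContDiff ℝ 1 u)
    (hper : ZPeriodic u) :
    ε ^ 2 * ∫ x, dotP (grad U x) (grad u x) ∂(torusMeasure d) =
      -∫ x, g x * u x ∂(torusMeasure d) := by
  rw [eq_neg_iff_add_eq_zero, ← norm_le_zero_iff]
  set K := ε ^ 2 * ∫ x, ‖grad U x‖ ∂torusMeasure d + ∫ x, ‖g x‖ ∂torusMeasure d
  suffices hδ : ∀ δ > 0, ‖ε ^ 2 * ∫ x, dotP (grad U x) (grad u x) ∂torusMeasure d +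
      ∫ x, g x * u x ∂torusMeasure d‖ ≤ δ * K by
    refine ge_of_tendsto (tendsto_nhdsWithin_of_tendsto_nhds (a := 0) (s := Ioi 0) ?_)
      (eventually_nhdsWithin_of_forall hδ)
    exact (continuous_id.mul continuous_const).tendsto' 0 0 (zero_mul K)
  intro δ hδ
  obtain ⟨w, hw₁, hwper, hclose⟩ := (coveringRadiusLE_span_basis _).exists_contDiff_norm_sub_le hu
    (zPeriodic_iff_periodicMod.1 hper) hδ
  replace hwper : ZPeriodic w := zPeriodic_iff_periodicMod.2 hwper
  have hgrad := norm_integral_sub_integral_le (integrable_dotP_grad hU hUper hu hper)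
    (integrable_dotP_grad hU hUper (hw₁.of_le (by exact_mod_cast le_top)) hwper)
    ((hUper.grad.integrable (continuous_grad hU)).norm.const_mul δ) (ae_of_all _ fun x => by
      rw [dotP_grad, dotP_grad, ← sub_apply]
      exact ContinuousLinearMap.le_of_opNorm_le _ (by rw [norm_sub_rev]; exact (hclose x).2) _)
  have hval := norm_integral_sub_integral_le (hper.integrable_mul hu.continuous hg)
    (hwper.integrable_mul hw₁.continuous hg) (hg.norm.const_mul δ) (ae_of_all _ fun x => by
      rw [← mul_sub, norm_mul, mul_comm, norm_sub_rev]
      exact mul_le_mul_of_nonneg_right (hclose x).1 (norm_nonneg _))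
  rw [integral_const_mul] at hgrad hval
  calc _ = ‖ε ^ 2 * (∫ x, dotP (grad U x) (grad u x) ∂torusMeasure d -
          ∫ x, dotP (grad U x) (grad w x) ∂torusMeasure d) +
        (∫ x, g x * u x ∂torusMeasure d - ∫ x, g x * w x ∂torusMeasure d)‖ := by
        congr 1
        linear_combination hw w hw₁ hwper
    _ ≤ ε ^ 2 * (δ * ∫ x, ‖grad U x‖ ∂torusMeasure d) + δ * ∫ x, ‖g x‖ ∂torusMeasure d := by
        refine (norm_add_le _ _).trans (add_le_add ?_ hval)
        rw [norm_mul, Real.norm_of_nonneg (sq_nonneg ε)]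
        gcongr
    _ = δ * K := by ring

theorem energy_identity (hU : ContDiff ℝ 1 U) (hUper : ZPeriodic U)
    (hg : Integrable g (torusMeasure d)) (hw : IsWeakPoisson ε U g) :
    ε ^ 2 * ∫ x, euclNorm (grad U x) ^ 2 ∂(torusMeasure d) = -∫ x, g x * U x ∂(torusMeasure d) := by
  simp only [← dotP_self]
  exact of_contDiff_one hU hUper hg hw hU hUper

end IsWeakPoisson

end Torus

/-! ### The Wasserstein distance on the torus -/

section Wasserstein

variable {d : ℕ}

theorem euclNorm_nonneg (v : Fin d → ℝ) : 0 ≤ euclNorm v :=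
  Real.sqrt_nonneg _

theorem bddBelow_range_euclNorm_add_latVec (x : Fin d → ℝ) :
    BddBelow (range fun k : Fin d → ℤ => euclNorm (x + latVec k)) :=
  ⟨0, forall_mem_range.2 fun _ => euclNorm_nonneg _⟩

theorem tdist_nonneg (x y : Fin d → ℝ) : 0 ≤ tdist x y :=
  Real.iInf_nonneg fun _ => euclNorm_nonneg _

theorem measurable_tdist : Measurable fun z : (Fin d → ℝ) × (Fin d → ℝ) => tdist z.1 z.2 := by
  refine Measurable.iInf fun k => ?_
  unfold euclNorm
  fun_prop

theorem exists_tdist_le (d : ℕ) : ∃ D, ∀ x y : Fin d → ℝ, tdist x y ≤ D := by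
  refine ⟨∑ i, ‖(EuclideanSpace.basisFun (Fin d) ℝ).toBasis i‖, fun x y => ?_⟩
  obtain ⟨l, hl, hle⟩ := coveringRadiusLE_span_basis
    (EuclideanSpace.basisFun (Fin d) ℝ).toBasis (WithLp.toLp 2 (x - y))
  obtain ⟨k, rfl⟩ := mem_euclideanIntegerLattice.1 hl
  rw [← WithLp.toLp_add, norm_toLp_eq_euclNorm] at hle
  exact (ciInf_le (bddBelow_range_euclNorm_add_latVec _) k).trans hle

theorem integrable_tdist_rpow {q : ℝ} (hq : 0 ≤ q) (cpl : Measure ((Fin d → ℝ) × (Fin d → ℝ)))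
    [IsFiniteMeasure cpl] : Integrable (fun z => tdist z.1 z.2 ^ q) cpl := by
  obtain ⟨D, hD⟩ := exists_tdist_le d
  refine .of_bound (measurable_tdist.pow_const q).aestronglyMeasurable (D ^ q)
    (ae_of_all _ fun z => ?_)
  rw [Real.norm_of_nonneg (Real.rpow_nonneg (tdist_nonneg _ _) q)]
  exact Real.rpow_le_rpow (tdist_nonneg _ _) (hD _ _) hq

theorem wassPow_nonneg (q : ℝ) (μ₁ μ₂ : Measure (Fin d → ℝ)) : 0 ≤ WassPow q μ₁ μ₂ := by
  refine Real.sInf_nonneg ?_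
  rintro _ ⟨cpl, -, -, rfl⟩
  exact integral_nonneg fun z => Real.rpow_nonneg (tdist_nonneg _ _) q

theorem le_wassPow {q a : ℝ} {μ₁ μ₂ : Measure (Fin d → ℝ)} [IsProbabilityMeasure μ₁]
    [IsProbabilityMeasure μ₂] (h : ∀ cpl : Measure ((Fin d → ℝ) × (Fin d → ℝ)),
      IsProbabilityMeasure cpl → IsCoupling cpl μ₁ μ₂ → a ≤ ∫ z, tdist z.1 z.2 ^ q ∂cpl) :
    a ≤ WassPow q μ₁ μ₂ := by
  refine le_csInf ⟨_, μ₁.prod μ₂, inferInstance, ⟨?_, ?_⟩, rfl⟩ ?_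
  · simp [Measure.map_fst_prod]
  · simp [Measure.map_snd_prod]
  · rintro _ ⟨cpl, hprob, hcpl, rfl⟩
    exact h cpl hprob hcpl

theorem two_mul_cTransform_add_le_tdist_sq {ψ : EuclideanSpace ℝ (Fin d) → ℝ}
    (hψ : BddAbove (range ψ)) (hper : PeriodicMod (euclideanIntegerLattice d) ψ)
    (x y : Fin d → ℝ) :
    2 * (cTransform ψ (WithLp.toLp 2 x) + ψ (WithLp.toLp 2 y)) ≤ tdist x y ^ 2 := by
  refine (Real.sqrt_le_left (tdist_nonneg x y)).1 (le_ciInf fun k => ?_)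
  refine (Real.sqrt_le_left (euclNorm_nonneg _)).2 ?_
  have hle := cTransform.le hψ (WithLp.toLp 2 x + WithLp.toLp 2 (latVec k)) (WithLp.toLp 2 y)
  rw [cTransform.periodicMod hper _ (mem_euclideanIntegerLattice.2 ⟨k, rfl⟩), add_sub_right_comm,
    ← WithLp.toLp_sub, ← WithLp.toLp_add, norm_toLp_eq_euclNorm] at hle
  linarith

theorem two_mul_dualFunctional_le_wassPow {μ₁ μ₂ : Measure (Fin d → ℝ)} [IsProbabilityMeasure μ₁]
    [IsProbabilityMeasure μ₂] {ψ : EuclideanSpace ℝ (Fin d) → ℝ} (hψ : Continuous ψ)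
    (hper : PeriodicMod (euclideanIntegerLattice d) ψ) :
    2 * dualFunctional (μ₁.map (MeasurableEquiv.toLp 2 (Fin d → ℝ)))
      (μ₂.map (MeasurableEquiv.toLp 2 (Fin d → ℝ))) ψ ≤ WassPow 2 μ₁ μ₂ := by
  have hL := coveringRadiusLE_span_basis (EuclideanSpace.basisFun (Fin d) ℝ).toBasis
  have htoLp := (MeasurableEquiv.toLp 2 (Fin d → ℝ)).measurable
  have hφ : Continuous (cTransform ψ) := cTransform.continuous hL (hL.bddAbove_range hψ hper) hper
  refine le_wassPow fun cpl _ hcpl => ?_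
  rw [dualFunctional, ← hcpl.1, ← hcpl.2, Measure.map_map htoLp measurable_fst,
    Measure.map_map htoLp measurable_snd,
    integral_map (by fun_prop) hφ.aestronglyMeasurable,
    integral_map (by fun_prop) hψ.aestronglyMeasurable]
  have hφi : Integrable (fun z => cTransform ψ (WithLp.toLp 2 z.1)) cpl :=
    hL.integrable_comp hφ (cTransform.periodicMod hper) (htoLp.comp measurable_fst)
  have hψi : Integrable (fun z => ψ (WithLp.toLp 2 z.2)) cpl :=
    hL.integrable_comp hψ hper (htoLp.comp measurable_snd)
  simp only [Function.comp_apply, MeasurableEquiv.toLp_apply]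
  rw [← integral_add hφi hψi, ← integral_const_mul]
  refine integral_mono ((hφi.add hψi).const_mul 2) (integrable_tdist_rpow zero_le_two cpl)
    fun z => ?_
  simpa only [Real.rpow_two] using
    two_mul_cTransform_add_le_tdist_sq (hL.bddAbove_range hψ hper) hper z.1 z.2

theorem map_toLp_torusMeasure (d : ℕ) :
    (torusMeasure d).map (MeasurableEquiv.toLp 2 (Fin d → ℝ)) =
      volume.restrict (ZSpan.fundamentalDomain (EuclideanSpace.basisFun (Fin d) ℝ).toBasis) := by
  have hpre : WithLp.toLp 2 ⁻¹'
      ZSpan.fundamentalDomain (EuclideanSpace.basisFun (Fin d) ℝ).toBasis = Tcube d := by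
    ext x
    simp [ZSpan.mem_fundamentalDomain, Tcube]
  rw [torusMeasure, ← hpre]
  exact ((PiLp.volume_preserving_toLp (Fin d)).restrict_preimage
    (ZSpan.fundamentalDomain_measurableSet _)).map_eq

theorem sq_sub_integral_le_wassPow {μ₁ μ₂ : Measure (Fin d → ℝ)} [IsProbabilityMeasure μ₁]
    [IsProbabilityMeasure μ₂] {M : ℝ≥0} {u : (Fin d → ℝ) → ℝ} (hμ₁ : μ₁ ≤ M • torusMeasure d)
    (hμ₂ : μ₂ ≤ M • torusMeasure d) (hu : ContDiff ℝ 1 u) (hper : ZPeriodic u) :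
    (∫ x, u x ∂μ₂ - ∫ x, u x ∂μ₁) ^ 2 ≤
      M * (∫ x, euclNorm (grad u x) ^ 2 ∂(torusMeasure d)) * WassPow 2 μ₁ μ₂ := by
  let b := (EuclideanSpace.basisFun (Fin d) ℝ).toBasis
  let e : (Fin d → ℝ) ≃ᵐ EuclideanSpace ℝ (Fin d) := MeasurableEquiv.toLp 2 (Fin d → ℝ)
  have hL := coveringRadiusLE_span_basis b
  have : Countable (Submodule.span ℤ (range b)).toAddSubgroup :=
    inferInstanceAs (Countable (Submodule.span ℤ (range b)))
  have hprob (μ : Measure (Fin d → ℝ)) [IsProbabilityMeasure μ] : IsProbabilityMeasure (μ.map e) :=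
    Measure.isProbabilityMeasure_map e.measurable.aemeasurable
  have hmap {μ : Measure (Fin d → ℝ)} (hμ : μ ≤ M • torusMeasure d) :
      μ.map e ≤ M • volume.restrict (ZSpan.fundamentalDomain b) := by
    rw [← map_toLp_torusMeasure, ← Measure.map_smul]
    exact Measure.map_mono hμ e.measurable
  have := hprob μ₁
  have := hprob μ₂
  obtain ⟨ψ, hψ⟩ := exists_isDualMaximizer hL (μ₁.map e) (μ₂.map e)
  have hdual := hψ.sq_sub_integral_le (m := volume) (M := M) hL
    (ZSpan.fundamentalDomain_measurableSet b)
    (ZSpan.exist_unique_vadd_mem_fundamentalDomain b)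
    (ZSpan.fundamentalDomain_isBounded b).measure_lt_top.ne (hmap hμ₁) (hmap hμ₂)
    (fun x => hasGradientAt_comp_ofLp (hu.differentiable one_ne_zero x.ofLp))
    ((PiLp.continuous_toLp 2 _).comp ((continuous_grad hu).comp (PiLp.continuous_ofLp 2 _)))
    hper.periodicMod_comp_ofLp
    fun l hl x => congrArg (WithLp.toLp 2) (hper.grad.periodicMod_comp_ofLp l hl x)
  rw [← map_toLp_torusMeasure, e.measurableEmbedding.integral_map,
    e.measurableEmbedding.integral_map, e.measurableEmbedding.integral_map] at hdual
  simp only [e, MeasurableEquiv.toLp_apply, norm_toLp_eq_euclNorm] at hdual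
  refine hdual.trans (mul_le_mul_of_nonneg_left
    (two_mul_dualFunctional_le_wassPow hψ.continuous hψ.periodicMod) (by positivity))

end Wasserstein

/-! ### Measures with a bounded density -/

section Density

variable {d : ℕ} {ε : ℝ} {h h₁ h₂ U₁ U₂ : (Fin d → ℝ) → ℝ}

theorem isProbabilityMeasure_densMeasure (hnn : ∀ x, 0 ≤ h x)
    (hint : ∫ x, h x ∂(torusMeasure d) = 1) : IsProbabilityMeasure (densMeasure h) := by
  have hi : Integrable h (torusMeasure d) := .of_integral_ne_zero (by simp [hint])
  refine ⟨?_⟩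
  rw [densMeasure, withDensity_apply _ .univ, Measure.restrict_univ,
    ← ofReal_integral_eq_lintegral_ofReal hi (ae_of_all _ hnn), hint, ENNReal.ofReal_one]

theorem densMeasure_le_smul {M : ℝ≥0} (hL : MemLp h ⊤ (torusMeasure d)) (hM : LpNorm ⊤ h ≤ M) :
    densMeasure h ≤ M • torusMeasure d := by
  change _ ≤ (M : ℝ≥0∞) • torusMeasure d
  rw [densMeasure, ← withDensity_const]
  refine withDensity_mono ?_
  filter_upwards [ae_le_eLpNormEssSup (f := h) (μ := torusMeasure d)] with x hx
  calc ENNReal.ofReal (h x) ≤ ‖h x‖ₑ := by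
        rw [← ofReal_norm]
        exact ENNReal.ofReal_le_ofReal (le_abs_self _)
    _ ≤ eLpNorm h ⊤ (torusMeasure d) := by rwa [eLpNorm_exponent_top]
    _ ≤ M := by
        rw [← ENNReal.ofReal_toReal hL.eLpNorm_ne_top, ← ENNReal.ofReal_coe_nnreal]
        exact ENNReal.ofReal_le_ofReal hM

theorem integral_densMeasure (hm : Measurable h) (hnn : ∀ x, 0 ≤ h x) (u : (Fin d → ℝ) → ℝ) :
    ∫ x, u x ∂(densMeasure h) = ∫ x, h x * u x ∂(torusMeasure d) := by
  rw [densMeasure, integral_withDensity_eq_integral_toReal_smul (by fun_prop) (by simp)]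
  simp only [ENNReal.toReal_ofReal (hnn _), smul_eq_mul]

theorem IsWeakPoisson.energy_identity_sub (hm₁ : Measurable h₁) (hm₂ : Measurable h₂)
    (hnn₁ : ∀ x, 0 ≤ h₁ x) (hnn₂ : ∀ x, 0 ≤ h₂ x) (hi₁ : Integrable h₁ (torusMeasure d))
    (hi₂ : Integrable h₂ (torusMeasure d)) (hU₁ : ContDiff ℝ 1 U₁) (hU₂ : ContDiff ℝ 1 U₂)
    (hUper₁ : ZPeriodic U₁) (hUper₂ : ZPeriodic U₂) (hw₁ : IsWeakPoisson ε U₁ fun x => h₁ x - 1)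
    (hw₂ : IsWeakPoisson ε U₂ fun x => h₂ x - 1) :
    ε ^ 2 * ∫ x, euclNorm (grad U₁ x - grad U₂ x) ^ 2 ∂(torusMeasure d) =
      ∫ x, (U₁ x - U₂ x) ∂(densMeasure h₂) - ∫ x, (U₁ x - U₂ x) ∂(densMeasure h₁) := by
  have hU : ContDiff ℝ 1 fun x => U₁ x - U₂ x := hU₁.sub hU₂
  have hper : ZPeriodic fun x => U₁ x - U₂ x := fun x k => by simp only [hUper₁ x k, hUper₂ x k]
  have hw : IsWeakPoisson ε (fun x => U₁ x - U₂ x) fun x => h₁ x - 1 - (h₂ x - 1) :=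
    .sub hU₁ hUper₁ hU₂ hUper₂ (hi₁.sub (integrable_const 1)) (hi₂.sub (integrable_const 1)) hw₁ hw₂
  simp only [sub_sub_sub_cancel_right] at hw
  have hi : Integrable (fun x => h₁ x - h₂ x) (torusMeasure d) := hi₁.sub hi₂
  have henergy := hw.energy_identity hU hper hi
  simp only [grad_sub hU₁ hU₂, sub_mul (h₁ _)] at henergy
  rw [henergy, integral_sub (hper.integrable_mul hU.continuous hi₁)
    (hper.integrable_mul hU.continuous hi₂), integral_densMeasure hm₁ hnn₁,
    integral_densMeasure hm₂ hnn₂, neg_sub]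

end Density

/-- Loeper-type stability estimate: for weak solutions `Ū_i` of
`ε² Δ Ū_i = h_i − 1` with `h_i` probability densities in `L^∞(𝕋^d)`,
`‖∇Ū₁ − ∇Ū₂‖²_{L²} ≤ ε^{-4} maxᵢ ‖h_i‖_{L^∞} W₂²(h₁ dx, h₂ dx)`. -/
theorem statement8 (d : ℕ) (hd : 1 ≤ d) (ε : ℝ) (hε : 0 < ε)
    (h₁ h₂ U₁ U₂ : (Fin d → ℝ) → ℝ)
    (hm₁ : Measurable h₁) (hm₂ : Measurable h₂)
    (hper₁ : ZPeriodic h₁) (hper₂ : ZPeriodic h₂)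
    (hnn₁ : ∀ x, 0 ≤ h₁ x) (hnn₂ : ∀ x, 0 ≤ h₂ x)
    (hint₁ : (∫ x, h₁ x ∂(torusMeasure d)) = 1)
    (hint₂ : (∫ x, h₂ x ∂(torusMeasure d)) = 1)
    (hL₁ : MemLp h₁ ⊤ (torusMeasure d)) (hL₂ : MemLp h₂ ⊤ (torusMeasure d))
    (hU₁ : ContDiff ℝ 1 U₁) (hU₂ : ContDiff ℝ 1 U₂)
    (hUper₁ : ZPeriodic U₁) (hUper₂ : ZPeriodic U₂)
    (hw₁ : IsWeakPoisson ε U₁ (fun x => h₁ x - 1))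
    (hw₂ : IsWeakPoisson ε U₂ (fun x => h₂ x - 1)) :
    (∫ x, euclNorm (grad U₁ x - grad U₂ x) ^ 2 ∂(torusMeasure d)) ≤
      1 / ε ^ 4 * max (LpNorm ⊤ h₁) (LpNorm ⊤ h₂) *
        WassPow 2 (densMeasure h₁) (densMeasure h₂) := by
  have := isProbabilityMeasure_densMeasure hnn₁ hint₁
  have := isProbabilityMeasure_densMeasure hnn₂ hint₂
  let M : ℝ≥0 := ⟨max (LpNorm ⊤ h₁) (LpNorm ⊤ h₂), le_max_of_le_left ENNReal.toReal_nonneg⟩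
  set I := ∫ x, euclNorm (grad U₁ x - grad U₂ x) ^ 2 ∂(torusMeasure d)
  set W := WassPow 2 (densMeasure h₁) (densMeasure h₂)
  have hI : 0 ≤ I := integral_nonneg fun x => sq_nonneg _
  have hW : 0 ≤ W := wassPow_nonneg 2 _ _
  have henergy : ε ^ 2 * I =
      ∫ x, (U₁ x - U₂ x) ∂(densMeasure h₂) - ∫ x, (U₁ x - U₂ x) ∂(densMeasure h₁) :=
    IsWeakPoisson.energy_identity_sub hm₁ hm₂ hnn₁ hnn₂ (hL₁.integrable le_top)
      (hL₂.integrable le_top) hU₁ hU₂ hUper₁ hUper₂ hw₁ hw₂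
  have hdual := sq_sub_integral_le_wassPow (M := M)
    (densMeasure_le_smul hL₁ (le_max_left _ _)) (densMeasure_le_smul hL₂ (le_max_right _ _))
    (hU₁.sub hU₂) fun x k => by rw [hUper₁ x k, hUper₂ x k]
  simp only [grad_sub hU₁ hU₂] at hdual
  rw [← henergy] at hdual
  rw [one_div_mul_eq_div, div_mul_eq_mul_div, le_div_iff₀ (by positivity)]
  obtain hI₀ | hI₀ := hI.eq_or_lt
  · rw [← hI₀, zero_mul]
    exact mul_nonneg M.2 hW
  · refine le_of_mul_le_mul_right (?_ : _ ≤ M * W * I) hI₀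
    linarith
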